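/- There exist a finitely presented, residually finite group G, a finitely generated subgroup H ≤ G, and an element g ∈ G such that: (1) g⁻¹Hg is strictly contained in H (so the conjugation by g restricts to an isomorphism from H onto a proper subgroup of itself, and in particular H is not co-Hopfian); (2) every injective group homomorphism G → G is surjective (G is co-Hopfian); and (3) G and H have the same finite quotients (for every finite group F, there is a surjective homomorphism G → F if and only if there is a surjective homomorphism H → F). -/

import Mathlib

/-!
The construction rests on an auxiliary finitely presented group `Q0`. Its generators are two Higman
quadruples `a i`, `b i` (so `a (i + 1)` conjugates `a i` to its square, with indices mod 4, and
similarly for `b`), an element `c` conjugated to `c ^ 2` by `a 0` and to `c ^ 3` by `b 0`, and a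
trivial generator `s`; moreover `b 0` commutes with every `a i`. Three facts are used.

* Every tuple in a finite group satisfying the relations is trivial (`higman_dead`, `gen_dead`).
* A tuple satisfying the relations up to central elements can be corrected by central elements
  (`central_split`), so central extensions of `Q0` split.
* Conjugation by `(b 0)⁻¹` fixes the `a i` and maps `c` to `c ^ 3`. It maps `S = ⟨a i, c⟩` onto
  `⟨a i, c ^ 3⟩`, which does not contain `c` (`exists_action`, `qc_notMem`). The last point comes
  from an action on `ℚ × κ` where `c` translates by one, `a 0` halves, `b 0` divides by three and
  all `a i` preserve the `3`-adic norm of the first coordinate: the set of points of norm less than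
  one is preserved by the `a i` and by `c ^ 3`, but not by `c`. The Higman quadruples in this action
  exist because a free action of an infinite cyclic group extends, after enlarging the set, to a
  Higman quadruple (`exists_higman`, `higman_on`).

The group `G0` is the semidirect product of a free group on letters indexed by `P0 × A0`, with
`A0 = Perm (Fin 3)`, and a group `E`. The group `E` is itself the semidirect product of a free group
on letters `J × Fin 4` and the finite group `A0 × (J → Perm (Fin 4))`. The letters `(j, ω)` act on
the base by a twist `β j`, an automorphism `x ↦ u x v` on one class of letters which fixes the
others, with `u` and `v` words in those others. Finite presentability and residual finiteness pass
to such semidirect products (`semidirect_fp`, `semidirect_rf`).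

`G0` is co-Hopfian. The finite group is rigid up to conjugacy, since the first cohomology of a
finite group permuting the letters of a free group vanishes (`cocycle_trivial`, `conj_section`);
hence, after composition with an inner automorphism, an injective endomorphism preserves it and a
power fixes it pointwise (`coHopfian_of_fix`). Centralizers then show that letters of `E` go to powers of themselves
(`fix_letter`) and that the free kernel goes to itself (`fix_base`). The twists pinning the classes
of letters force letters to go to letters or their inverses (`mem_rest_of_fixed`, `pin_rigid`,
`Compat.letter`), so a power is the identity on the free kernel (`Compat.exists_pow`), and finally
on the whole group (`eq_id_of_fix`).

There is a projection `pG : G0 →* Q0` killing `E` and the letters of one extra class, and mapping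
the other letters to the generators of `Q0`. The twists are chosen so that its kernel is generated
by `E` and one extra letter (`ker_pG`), hence finitely generated. The subgroup `H0` is the preimage
of `S`, and the conjugating element is a letter over `b 0`. A finite quotient of `G0` or of `H0` is
the image of the kernel of `pG`, as the relations die in finite groups (`surj_on_normal`).
Conversely a surjection `f` from the kernel onto a finite group extends to `G0` (and to `H0` by
restriction): conjugation in `G0` acts on the finite set of conjugacy classes of homomorphisms to the
finite group through finite quotients of `Q0`, hence trivially (`exists_conj`), and the remaining
obstruction is a central extension of `Q0`, which splits (`exists_extension`).
-/

/-- A group is co-Hopfian if every injective endomorphism is surjective. -/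
def IsCoHopfian (G : Type*) [Group G] : Prop :=
  ∀ f : G →* G, Function.Injective f → Function.Surjective f

/-- A group is residually finite if every nontrivial element survives in some
finite quotient. -/
def IsResiduallyFinite (G : Type*) [Group G] : Prop :=
  ∀ g : G, g ≠ 1 → ∃ (F : Type) (_ : Group F) (_ : Finite F) (φ : G →* F), φ g ≠ 1

/-- A group is finitely presented if it is isomorphic to a presented group on finitely
many generators with finitely many relators. -/
def IsFinitelyPresented (G : Type*) [Group G] : Prop :=
  ∃ (n : ℕ) (rels : Set (FreeGroup (Fin n))),
    rels.Finite ∧ Nonempty (G ≃* PresentedGroup rels)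

/-- Two groups have the same finite quotients. -/
def SameFiniteQuotients (G H : Type*) [Group G] [Group H] : Prop :=
  ∀ (F : Type) [Group F] [Finite F],
    (∃ f : G →* F, Function.Surjective f) ↔ ∃ f : H →* F, Function.Surjective f

/-! ### Finite presentability of semidirect products -/

open Monoid in
/-- The semidirect product is the quotient of the free product of the two factors by the finitely
many relations expressing the action of generators on generators. -/
theorem semidirect_fp {N E : Type} [Group N] [Group E] (φ : E →* MulAut N)
    [Group.IsFinitelyPresented N] [Group.IsFinitelyPresented E] [hN : Group.FG N] [hE : Group.FG E] :
    Group.IsFinitelyPresented (N ⋊[φ] E) := by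
  classical
  obtain ⟨T, hT⟩ := hN.out
  obtain ⟨U, hU⟩ := hE.out
  let f : Coprod N E →* N ⋊[φ] E := Coprod.lift SemidirectProduct.inl SemidirectProduct.inr
  let rel : E × N → Coprod N E := fun p =>
    Coprod.inr p.1 * Coprod.inl p.2 * (Coprod.inr p.1)⁻¹ * (Coprod.inl (φ p.1 p.2))⁻¹
  let R : Set (Coprod N E) := rel '' ((U : Set E) ×ˢ (T : Set N))
  have hRfin : R.Finite := ((U.finite_toSet).prod T.finite_toSet).image _
  have hfs : Function.Surjective f := by
    intro x
    refine ⟨Coprod.inl x.left * Coprod.inr x.right, ?_⟩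
    simp [f]
  refine Group.IsFinitelyPresented.of_surjective f hfs ⟨R, hRfin, ?_⟩
  apply le_antisymm
  · apply Subgroup.normalClosure_le_normal
    rintro _ ⟨⟨u, n⟩, -, rfl⟩
    simp [rel, f, MonoidHom.mem_ker, SemidirectProduct.inl_aut, mul_assoc]
  · let Q := Coprod N E ⧸ Subgroup.normalClosure R
    let q : Coprod N E →* Q := QuotientGroup.mk' _
    have key : ∀ u n, q (Coprod.inr u) * q (Coprod.inl n) * (q (Coprod.inr u))⁻¹
        = q (Coprod.inl (φ u n)) := by
      have h1 : ∀ u ∈ U, ∀ n, q (Coprod.inr u) * q (Coprod.inl n) * (q (Coprod.inr u))⁻¹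
        = q (Coprod.inl (φ u n)) := by
        intro u hu
        let a : N →* Q := ((MulAut.conj (q (Coprod.inr u))).toMonoidHom.comp q).comp Coprod.inl
        let b : N →* Q := (q.comp Coprod.inl).comp (φ u).toMonoidHom
        have : a = b := by
          apply MonoidHom.eq_of_eqOn_dense hT
          intro n hn
          have : q (rel (u, n)) = 1 := by
            rw [← MonoidHom.mem_ker, QuotientGroup.ker_mk']
            exact Subgroup.subset_normalClosure ⟨(u, n), ⟨hu, hn⟩, rfl⟩
          simp only [rel, map_mul, map_inv] at this
          simpa [a, b] using mul_inv_eq_one.mp this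
        intro n
        simpa [a, b] using DFunLike.congr_fun this n
      intro u
      have hu : u ∈ Subgroup.closure (U : Set E) := by rw [hU]; trivial
      induction hu using Subgroup.closure_induction with
      | mem x hx => exact h1 x hx
      | one => simp
      | mul x y _ _ hx hy =>
        intro n
        have := hx (φ y n)
        rw [← hy n] at this
        simpa [mul_assoc] using this
      | inv x _ hx =>
        intro n
        have := hx (φ x⁻¹ n)
        have h2 : φ x (φ x⁻¹ n) = n := by
          rw [← MulAut.mul_apply, ← map_mul, mul_inv_cancel, map_one, MulAut.one_apply]
        rw [h2] at this
        rw [← this]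
        simp [mul_assoc]
    let s : N ⋊[φ] E →* Q := SemidirectProduct.lift (q.comp Coprod.inl) (q.comp Coprod.inr) (by
      intro u
      ext n
      simpa using (key u n).symm)
    have hs : s.comp f = q := by
      apply Coprod.hom_ext
      · ext n; simp [s, f]
      · ext n; simp [s, f]
    intro x hx
    rw [← QuotientGroup.ker_mk' (Subgroup.normalClosure R), MonoidHom.mem_ker]
    change q x = 1
    rw [← hs, MonoidHom.comp_apply, MonoidHom.mem_ker.mp hx, map_one]

/-! ### Residual finiteness -/

/-- The letters act by partial injections on the ball of radius `|w|`; extended to permutations of the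
ball, they move the identity to `w`. -/
theorem freeGroup_rf (X : Type) [Finite X] : IsResiduallyFinite (FreeGroup X) := by
  classical
  intro w hw
  let B := {b : FreeGroup X // b.norm ≤ w.norm}
  have hB : Finite B := by
    have h := List.finite_length_le (X × Bool) w.norm
    have : Finite {l : List (X × Bool) // l.length ≤ w.norm} := h
    refine Finite.of_injective
      (fun b : B => (⟨b.1.toWord, b.2⟩ : {l : List (X × Bool) // l.length ≤ w.norm})) ?_
    intro a b h
    exact Subtype.ext (FreeGroup.toWord_injective (congrArg Subtype.val h))
  have hfin := Fintype.ofFinite B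
  let e : ∀ x : X, {b : B // (FreeGroup.of x * b.1).norm ≤ w.norm} ≃
      {b : B // ((FreeGroup.of x)⁻¹ * b.1).norm ≤ w.norm} := fun x =>
    { toFun := fun b => ⟨⟨FreeGroup.of x * b.1.1, b.2⟩, by simpa using b.1.2⟩
      invFun := fun b => ⟨⟨(FreeGroup.of x)⁻¹ * b.1.1, b.2⟩, by simpa using b.1.2⟩
      left_inv := fun b => by simp
      right_inv := fun b => by simp }
  let P : X → Equiv.Perm B := fun x => (e x).extendSubtype
  have hP : ∀ x (b : B) (hb : (FreeGroup.of x * b.1).norm ≤ w.norm),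
      P x b = ⟨FreeGroup.of x * b.1, hb⟩ := by
    intro x b hb
    exact (e x).extendSubtype_apply_of_mem b hb
  let one : B := ⟨1, by simp⟩
  have key : ∀ L : List (X × Bool), ∀ hL : L.length ≤ w.norm,
      FreeGroup.lift P (FreeGroup.mk L) one = ⟨FreeGroup.mk L, FreeGroup.norm_mk_le.trans hL⟩ := by
    intro L
    induction L with
    | nil => intro hL; simp [one, ← FreeGroup.one_eq_mk]
    | cons a L ih =>
      intro hL
      have hL' : L.length ≤ w.norm := by simp at hL; omega
      obtain ⟨x, _ | _⟩ := a
      · have h1 : FreeGroup.mk ((x, false) :: L) = (FreeGroup.of x)⁻¹ * FreeGroup.mk L := by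
          simp [FreeGroup.of, FreeGroup.inv_mk, FreeGroup.invRev]
        have h2 := FreeGroup.norm_mk_le.trans hL
        rw [h1] at h2
        simp only [h1, map_mul, map_inv, FreeGroup.lift_apply_of, Equiv.Perm.mul_apply, ih hL']
        rw [Equiv.Perm.inv_eq_iff_eq, hP x _ (by simpa using FreeGroup.norm_mk_le.trans hL')]
        simp
      · have h1 : FreeGroup.mk ((x, true) :: L) = FreeGroup.of x * FreeGroup.mk L := by
          simp [FreeGroup.of]
        have h2 := FreeGroup.norm_mk_le.trans hL
        rw [h1] at h2
        simp only [h1, map_mul, FreeGroup.lift_apply_of, Equiv.Perm.mul_apply, ih hL']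
        exact hP x _ h2
  refine ⟨Equiv.Perm B, inferInstance, inferInstance, FreeGroup.lift P, fun h => ?_⟩
  have h2 := congrArg Subtype.val (key w.toWord le_rfl)
  dsimp only at h2
  rw [FreeGroup.mk_toWord, h] at h2
  exact hw h2.symm

theorem finite_monoidHom (N F : Type*) [Group N] [Group.FG N] [Group F] [Finite F] :
    Finite (N →* F) := by
  obtain ⟨T, hT⟩ := (inferInstance : Group.FG N).out
  refine Finite.of_injective (fun (f : N →* F) (t : T) => f t.1) ?_
  intro f g h
  refine MonoidHom.eq_of_eqOn_dense hT fun t ht => ?_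
  exact congrFun h ⟨t, ht⟩

/-- An element with trivial right component is detected by a finite set on which the semidirect
product acts, namely `Hom(N, F) × F` for a finite quotient `F` of `N`. -/
theorem semidirect_rf {N E : Type} [Group N] [Group E] (φ : E →* MulAut N) [Group.FG N]
    (hN : IsResiduallyFinite N) (hE : IsResiduallyFinite E) :
    IsResiduallyFinite (N ⋊[φ] E) := by
  intro x hx
  by_cases he : x.right = 1
  · have hn : x.left ≠ 1 := fun h => hx (SemidirectProduct.ext h he)
    obtain ⟨F, _, _, f, hf⟩ := hN _ hn
    have := finite_monoidHom N F
    let act : MulAction (N ⋊[φ] E) ((N →* F) × F) :=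
      { smul := fun g p => (p.1.comp (φ g.right⁻¹).toMonoidHom,
          p.1 (φ g.right⁻¹ g.left) * p.2)
        one_smul := fun p => by
          change ((p.1.comp _, _) : (N →* F) × F) = p
          ext <;> simp
        mul_smul := fun g h p => by
          change ((p.1.comp _, _) : (N →* F) × F) =
            ((p.1.comp (φ h.right⁻¹).toMonoidHom).comp _,
              (p.1.comp (φ h.right⁻¹).toMonoidHom) (φ g.right⁻¹ g.left) *
                (p.1 (φ h.right⁻¹ h.left) * p.2))
          ext <;> simp [mul_assoc] }
    refine ⟨Equiv.Perm ((N →* F) × F), inferInstance, inferInstance,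
      MulAction.toPermHom _ _, fun h => hf ?_⟩
    have h2 : ((f.comp (φ x.right⁻¹).toMonoidHom, f (φ x.right⁻¹ x.left) * 1) : (N →* F) × F)
      = (f, 1) := DFunLike.congr_fun h (f, 1)
    have h3 := congrArg Prod.snd h2
    simpa [he] using h3
  · obtain ⟨F, i1, i2, f, hf⟩ := hE _ he
    exact ⟨F, i1, i2, f.comp SemidirectProduct.rightHom, by simpa using hf⟩

theorem finite_rf (F : Type) [Group F] [Finite F] : IsResiduallyFinite F :=
  fun _ hg => ⟨F, inferInstance, inferInstance, MonoidHom.id F, hg⟩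

/-! ### Nonabelian cohomology of a finite group permuting letters -/

/-- The automorphism of a free group permuting its letters. -/
def permAut (X : Type*) : Equiv.Perm X →* MulAut (FreeGroup X) where
  toFun σ := FreeGroup.freeGroupCongr σ
  map_one' := by
    ext w
    change FreeGroup.map id w = w
    simp
  map_mul' σ τ := by
    ext w
    change FreeGroup.map (σ ∘ τ) w = FreeGroup.map σ (FreeGroup.map τ w)
    rw [FreeGroup.map.comp]

theorem permAut_apply {X : Type*} (σ : Equiv.Perm X) (w : FreeGroup X) :
    permAut X σ w = FreeGroup.map σ w := rfl

@[simp] theorem permAut_of {X : Type*} (σ : Equiv.Perm X) (x : X) :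
    permAut X σ (FreeGroup.of x) = FreeGroup.of (σ x) := by
  simp [permAut_apply]

section norm
variable {X : Type*} [DecidableEq X]

theorem norm_permAut (σ : Equiv.Perm X) (w : FreeGroup X) :
    (permAut X σ w).norm = w.norm := by
  have h : ∀ (σ : Equiv.Perm X) (w : FreeGroup X), (permAut X σ w).norm ≤ w.norm := by
    intro σ w
    rw [permAut_apply]
    conv_lhs => rw [← FreeGroup.mk_toWord (x := w)]
    rw [FreeGroup.map.mk]
    refine FreeGroup.norm_mk_le.trans ?_
    simp [FreeGroup.norm]
  refine le_antisymm (h σ w) ?_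
  have := h σ⁻¹ (permAut X σ w)
  rwa [← MulAut.mul_apply, ← map_mul, inv_mul_cancel, map_one, MulAut.one_apply] at this

/-- Left multiplication by a letter lengthens a word, unless it cancels with its first letter. -/
theorem norm_letter_mul (l : X × Bool) (z : FreeGroup X) :
    ((FreeGroup.mk [l] * z).norm = z.norm + 1) ∨
    (z.norm = (FreeGroup.mk [l] * z).norm + 1 ∧ z.toWord.head? = some (l.1, !l.2)) := by
  have h : (FreeGroup.mk [l] * z).toWord = FreeGroup.reduce (l :: z.toWord) := by
    conv_lhs => rw [← FreeGroup.mk_toWord (x := z)]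
    simp [FreeGroup.toWord_mk]
  have h2 := FreeGroup.reduce_toWord z
  unfold FreeGroup.norm
  rw [h, FreeGroup.reduce.cons, h2]
  rcases hz : z.toWord with _ | ⟨a, t⟩
  · simp
  · simp only
    split_ifs with hc
    · right
      obtain ⟨a1, a2⟩ := a
      obtain ⟨l1, l2⟩ := l
      simp_all
    · left; simp

/-- At most one of two distinct letters cancels with the first letter of `z`, so that squared length
is strictly convex. -/
theorem norm_two_letters (l m : X × Bool) (hlm : l ≠ m) (z : FreeGroup X) :
    2 * z.norm ^ 2 < (FreeGroup.mk [l] * z).norm ^ 2 + (FreeGroup.mk [m] * z).norm ^ 2 := by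
  rcases norm_letter_mul l z with h1 | ⟨h1, h1'⟩ <;> rcases norm_letter_mul m z with h2 | ⟨h2, h2'⟩
  · rw [h1, h2]; nlinarith
  · rw [h1, h2]; nlinarith
  · rw [h1, h2]; nlinarith
  · rw [h1'] at h2'
    exfalso
    apply hlm
    simp only [Option.some.injEq, Prod.mk.injEq] at h2'
    exact Prod.ext h2'.1 (by simpa using h2'.2)

variable {A : Type*} [Fintype A]

/-- Sum of squared word distances from `w` to the points `p a`. -/
def sqDist (p : A → FreeGroup X) (w : FreeGroup X) : ℕ := ∑ a, (w⁻¹ * p a).norm ^ 2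

theorem sqDist_mul (p : A → FreeGroup X) (v w : FreeGroup X) :
    sqDist p (v * w) = sqDist (fun a => v⁻¹ * p a) w := by
  simp [sqDist, mul_assoc]

/-- Strict convexity of the sum of squared distances along a reduced path of length two. -/
theorem sqDist_convex [Nonempty A] (p : A → FreeGroup X) (l m : X × Bool)
    (hr : l.1 = m.1 → l.2 = m.2) :
    2 * sqDist p (FreeGroup.mk [l]) < sqDist p 1 + sqDist p (FreeGroup.mk [l] * FreeGroup.mk [m]) := by
  unfold sqDist
  rw [Finset.mul_sum, ← Finset.sum_add_distrib]
  refine Finset.sum_lt_sum_of_nonempty Finset.univ_nonempty fun a _ => ?_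
  have hne : l ≠ (m.1, !m.2) := by
    rintro rfl
    simp at hr
  have h := norm_two_letters l (m.1, !m.2) hne ((FreeGroup.mk [l])⁻¹ * p a)
  have h3 : FreeGroup.mk [(m.1, !m.2)] = (FreeGroup.mk [m])⁻¹ := by
    simp [FreeGroup.inv_mk, FreeGroup.invRev]
  rw [h3] at h
  simp only [mul_inv_cancel_left] at h
  simp only [inv_one, one_mul, mul_inv_rev, mul_assoc]
  exact h

omit [DecidableEq X] in
theorem mk_cons (l : X × Bool) (L : List (X × Bool)) :
    FreeGroup.mk (l :: L) = FreeGroup.mk [l] * FreeGroup.mk L := by simp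

/-- By convexity, the sum of squared distances keeps increasing along a reduced path on which it
increases at the first step. -/
theorem sqDist_lt [Nonempty A] (L : List (X × Bool)) : ∀ (l : X × Bool) (p : A → FreeGroup X),
    FreeGroup.IsReduced (l :: L) → sqDist p 1 < sqDist p (FreeGroup.mk [l]) →
    sqDist p 1 < sqDist p (FreeGroup.mk (l :: L)) := by
  induction L with
  | nil => exact fun l p _ h => h
  | cons m L ih =>
    intro l p hr h
    rw [FreeGroup.isReduced_cons_cons] at hr
    have h1 := sqDist_convex p l m hr.1
    rw [mk_cons, sqDist_mul]
    have h2 := ih m (fun a => (FreeGroup.mk [l])⁻¹ * p a) hr.2 (by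
      rw [← sqDist_mul, ← sqDist_mul, mul_one]; omega)
    rw [← sqDist_mul, mul_one] at h2
    omega

/-- By strict convexity, two minimisers of the sum of squared distances are at distance at most one. -/
theorem norm_le_one_of_min [Nonempty A] (p : A → FreeGroup X) (hmin : ∀ w, sqDist p 1 ≤ sqDist p w)
    (w : FreeGroup X) (hw : sqDist p w = sqDist p 1) : w.norm ≤ 1 := by
  have hr := FreeGroup.isReduced_toWord (x := w)
  rw [← FreeGroup.mk_toWord (x := w)] at hw
  unfold FreeGroup.norm
  rcases h : w.toWord with _ | ⟨l, _ | ⟨m, L⟩⟩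
  · simp
  · simp
  · exfalso
    rw [h] at hr hw
    rw [FreeGroup.isReduced_cons_cons] at hr
    have h1 := sqDist_convex p l m hr.1
    have h0 := hmin (FreeGroup.mk [l])
    rw [mk_cons, sqDist_mul] at hw
    have h2 := sqDist_lt L m (fun a => (FreeGroup.mk [l])⁻¹ * p a) hr.2 (by
      rw [← sqDist_mul, ← sqDist_mul, mul_one]; omega)
    rw [← sqDist_mul, mul_one] at h2
    omega
end norm

/-- Vanishing of the first nonabelian cohomology of a finite group permuting the letters of a free
group. A minimiser `w` of the sum of squared distances to the values of the cocycle replaces the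
cocycle by `d a = w⁻¹ * c a * σ a w`. Minimisers are permuted by the affine action of the group, so
`d a` has length at most one for all `a`; were it a letter, `d (a ^ 2) = d a * σ a (d a)` would have
length two. -/
theorem cocycle_trivial {A X : Type*} [Group A] [Finite A] (σ : A →* Equiv.Perm X)
    (c : A → FreeGroup X) (hc : ∀ a b, c (a * b) = c a * permAut X (σ a) (c b)) :
    ∃ w, ∀ a, c a = w * (permAut X (σ a) w)⁻¹ := by
  classical
  have := Fintype.ofFinite A
  obtain ⟨w, hw⟩ : ∃ w, ∀ v, sqDist c w ≤ sqDist c v := by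
    obtain ⟨w, -, hw⟩ := WellFounded.has_min (InvImage.wf (sqDist c) Nat.lt_wfRel.wf) Set.univ
      ⟨1, trivial⟩
    exact ⟨w, fun v => not_lt.mp (hw v trivial)⟩
  have hinv : ∀ b v, sqDist c (c b * permAut X (σ b) v) = sqDist c v := by
    intro b v
    unfold sqDist
    rw [← Equiv.sum_comp (Equiv.mulLeft b)]
    refine Finset.sum_congr rfl fun a _ => ?_
    rw [← norm_permAut (σ b) (v⁻¹ * c a)]
    simp [hc, mul_assoc]
  let d : A → FreeGroup X := fun a => w⁻¹ * c a * permAut X (σ a) w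
  have hd : ∀ a b, d (a * b) = d a * permAut X (σ a) (d b) := by
    intro a b
    simp [d, hc, mul_assoc]
  have hd1 : ∀ a, (d a).norm ≤ 1 := by
    intro a
    refine norm_le_one_of_min (fun a => w⁻¹ * c a) (fun v => ?_) _ ?_
    · rw [← sqDist_mul, ← sqDist_mul, mul_one]; exact hw _
    · rw [← sqDist_mul, ← sqDist_mul, mul_one]
      simp only [d, mul_assoc, mul_inv_cancel_left]
      exact hinv a w
  refine ⟨w, fun a => ?_⟩
  suffices h : d a = 1 by
    simp only [d, mul_assoc, inv_mul_eq_one] at h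
    rw [eq_mul_inv_iff_mul_eq]; exact h.symm
  have h2 := hd1 (a * a)
  rw [hd] at h2
  have h1 := hd1 a
  generalize d a = z at h1 h2
  rw [← FreeGroup.mk_toWord (x := z)] at h2 ⊢
  unfold FreeGroup.norm at h1
  rcases h : z.toWord with _ | ⟨⟨x, b⟩, _ | ⟨m, L⟩⟩
  · rfl
  · exfalso
    rw [h, permAut_apply, FreeGroup.map.mk, FreeGroup.mul_mk] at h2
    have : FreeGroup.IsReduced ([(x, b)] ++ List.map (fun x => ((σ a) x.1, x.2)) [(x, b)]) := by
      simp [FreeGroup.isReduced_cons_cons]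
    unfold FreeGroup.norm at h2
    rw [FreeGroup.toWord_mk, this.reduce_eq] at h2
    simp at h2
  · rw [h] at h1; simp at h1

/-! ### Normal forms relative to a free factor -/

section NF
variable {X : Type} (P : X → Prop)

/-- The subgroup generated by the letters that do not satisfy `P`. -/
def Rest : Subgroup (FreeGroup X) := Subgroup.closure (FreeGroup.of '' {x | ¬ P x})

/-- Candidate normal forms `f₀ l₁ f₁ ⋯ lₙ fₙ` with the `lᵢ` signed letters satisfying `P` and the
`fᵢ` in the subgroup generated by the other letters. -/
abbrev NForm := Rest P × List (({x // P x} × Bool) × Rest P)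

variable {P}

/-- No `l · 1 · l⁻¹` occurs. -/
def NValid (L : List (({x // P x} × Bool) × Rest P)) : Prop :=
  L.IsChain fun a b => ¬ (a.2 = 1 ∧ b.1 = (a.1.1, !a.1.2))

/-- The element of the free group given by a signed letter. -/
def sletter (l : {x // P x} × Bool) : FreeGroup X := FreeGroup.mk [(l.1.1, l.2)]

theorem sletter_not (l : {x // P x} × Bool) : sletter (l.1, !l.2) = (sletter l)⁻¹ := by
  simp [sletter, FreeGroup.inv_mk, FreeGroup.invRev]

theorem sletter_true (x : {x // P x}) : sletter (x, true) = FreeGroup.of x.1 := rfl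

/-- The element represented by a normal form. -/
def NForm.prod (n : NForm P) : FreeGroup X :=
  n.1 * (n.2.map fun a => sletter a.1 * (a.2 : FreeGroup X)).prod

open Classical in
/-- Left multiplication of a normal form by a signed letter. -/
noncomputable def NForm.mulL (l : {x // P x} × Bool) (n : NForm P) : NForm P :=
  match n.2 with
  | [] => (1, [(l, n.1)])
  | a :: L => if n.1 = 1 ∧ a.1 = (l.1, !l.2) then (a.2, L) else (1, (l, n.1) :: a :: L)

theorem NForm.valid_mulL (l : {x // P x} × Bool) (n : NForm P) (hn : NValid n.2) :
    NValid (n.mulL l).2 := by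
  obtain ⟨f, _ | ⟨a, L⟩⟩ := n
  · simp [mulL, NValid]
  · simp only [mulL]
    split_ifs with h
    · exact hn.tail
    · exact List.isChain_cons_cons.mpr ⟨h, hn⟩

theorem NForm.mulL_nil (l : {x // P x} × Bool) (f : Rest P) :
    NForm.mulL l (f, []) = (1, [(l, f)]) := rfl

theorem NForm.mulL_pos (l : {x // P x} × Bool) (f : Rest P) (a L)
    (h : f = 1 ∧ a.1 = (l.1, !l.2)) : NForm.mulL l (f, a :: L) = (a.2, L) := if_pos h

theorem NForm.mulL_neg (l : {x // P x} × Bool) (f : Rest P) (a L)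
    (h : ¬ (f = 1 ∧ a.1 = (l.1, !l.2))) :
    NForm.mulL l (f, a :: L) = (1, (l, f) :: a :: L) := if_neg h

theorem NForm.mulL_mulL (l : {x // P x} × Bool) (n : NForm P) (hn : NValid n.2) :
    (n.mulL l).mulL (l.1, !l.2) = n := by
  obtain ⟨f, _ | ⟨a, L⟩⟩ := n
  · rw [mulL_nil, mulL_pos]; simp
  · by_cases h : f = 1 ∧ a.1 = (l.1, !l.2)
    · rw [mulL_pos _ _ _ _ h]
      obtain ⟨rfl, h⟩ := h
      obtain ⟨a1, a2⟩ := a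
      simp only at h
      subst h
      obtain _ | ⟨b, L⟩ := L
      · rfl
      · rw [mulL_neg]
        exact (List.isChain_cons_cons.mp hn).1
    · rw [mulL_neg _ _ _ _ h, mulL_pos]; simp

theorem NForm.prod_mulL (l : {x // P x} × Bool) (n : NForm P) :
    (n.mulL l).prod = sletter l * n.prod := by
  obtain ⟨f, _ | ⟨a, L⟩⟩ := n
  · simp [mulL, prod]
  · simp only [mulL]
    split_ifs with h
    · obtain ⟨rfl, h⟩ := h
      simp [prod, h, sletter_not, mul_assoc]
    · simp [prod, mul_assoc]

variable (P) in
/-- Reduced normal forms. -/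
abbrev VForm := {n : NForm P // NValid n.2}

/-- The permutation of reduced normal forms given by a letter satisfying `P`. -/
noncomputable def letterPerm (x : {x // P x}) : Equiv.Perm (VForm P) where
  toFun n := ⟨n.1.mulL (x, true), NForm.valid_mulL _ _ n.2⟩
  invFun n := ⟨n.1.mulL (x, false), NForm.valid_mulL _ _ n.2⟩
  left_inv n := Subtype.ext (NForm.mulL_mulL (x, true) n.1 n.2)
  right_inv n := Subtype.ext (NForm.mulL_mulL (x, false) n.1 n.2)

/-- The permutation of reduced normal forms given by an element of `Rest P`. -/
def restPerm : Rest P →* Equiv.Perm (VForm P) where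
  toFun r := 
    { toFun := fun n => ⟨(r * n.1.1, n.1.2), n.2⟩
      invFun := fun n => ⟨(r⁻¹ * n.1.1, n.1.2), n.2⟩
      left_inv := fun n => by simp
      right_inv := fun n => by simp }
  map_one' := by ext n <;> simp
  map_mul' r s := by ext n <;> simp [mul_assoc]

open Classical in
variable (P) in
/-- The action of the free group on reduced normal forms. -/
noncomputable def nfAct : FreeGroup X →* Equiv.Perm (VForm P) :=
  FreeGroup.lift fun x => if h : P x then letterPerm ⟨x, h⟩ else
    restPerm ⟨FreeGroup.of x, Subgroup.subset_closure ⟨x, h, rfl⟩⟩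

theorem nfAct_letter (l : {x // P x} × Bool) (n : VForm P) :
    (nfAct P (sletter l) n).1 = n.1.mulL l := by
  obtain ⟨x, _ | _⟩ := l
  · have : sletter (x, false) = (FreeGroup.of x.1)⁻¹ := sletter_not (x, true)
    rw [this, map_inv, nfAct, FreeGroup.lift_apply_of, dif_pos x.2]
    rfl
  · rw [sletter_true, nfAct, FreeGroup.lift_apply_of, dif_pos x.2]
    rfl

theorem nfAct_rest (r : Rest P) : nfAct P r = restPerm r := by
  obtain ⟨r, hr⟩ := r
  have h : ∀ r (hr : r ∈ Rest P), nfAct P r = restPerm ⟨r, hr⟩ := by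
    intro r hr
    induction hr using Subgroup.closure_induction with
    | mem x hx =>
      obtain ⟨x, hx, rfl⟩ := hx
      rw [nfAct, FreeGroup.lift_apply_of, dif_neg hx]
    | one => rw [map_one]; exact (map_one _).symm
    | mul x y hx hy h1 h2 =>
      rw [map_mul, h1, h2, ← map_mul]; rfl
    | inv x hx h1 =>
      rw [map_inv, h1, ← map_inv]; rfl
  exact h r hr

/-- Acting on the trivial normal form recovers a normal form from the element it represents. -/
theorem nfAct_prod (n : NForm P) (hn : NValid n.2) :
    nfAct P n.prod ⟨(1, []), List.isChain_nil⟩ = ⟨n, hn⟩ := by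
  obtain ⟨f, L⟩ := n
  induction L generalizing f with
  | nil => 
    simp only [NForm.prod, List.map_nil, List.prod_nil, mul_one, nfAct_rest]
    simp [restPerm]
  | cons a L ih =>
    have h := ih a.2 hn.tail
    simp only [NForm.prod, List.map_cons, List.prod_cons, mul_assoc] at h ⊢
    rw [map_mul, map_mul, nfAct_rest, Equiv.Perm.mul_apply, Equiv.Perm.mul_apply, h]
    have h2 : nfAct P (sletter a.1) ⟨(a.2, L), hn.tail⟩ = ⟨(1, a :: L), hn⟩ := by
      apply Subtype.ext
      rw [nfAct_letter]
      obtain _ | ⟨b, L⟩ := L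
      · simp [NForm.mulL]
      · have := (List.isChain_cons_cons.mp hn).1
        simp only [NForm.mulL]
        rw [if_neg this]
    rw [h2]
    simp [restPerm]

/-- Uniqueness of normal forms. -/
theorem prod_inj {n m : NForm P} (hn : NValid n.2) (hm : NValid m.2) (h : n.prod = m.prod) :
    n = m := by
  have h1 := nfAct_prod n hn
  rw [h, nfAct_prod m hm] at h1
  exact (congrArg Subtype.val h1).symm

/-- Existence of normal forms. -/
theorem exists_nf (w : FreeGroup X) : ∃ n : NForm P, NValid n.2 ∧ n.prod = w := by
  have h1 : ∀ x : X, ∀ n : VForm P,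
      (nfAct P (FreeGroup.of x) n).1.prod = FreeGroup.of x * n.1.prod := by
    intro x n
    by_cases hx : P x
    · rw [← sletter_true ⟨x, hx⟩, nfAct_letter, NForm.prod_mulL]
    · have := nfAct_rest (P := P) ⟨FreeGroup.of x, Subgroup.subset_closure ⟨x, hx, rfl⟩⟩
      simp only at this
      rw [this]
      simp [restPerm, NForm.prod, mul_assoc]
  have h : ∀ w : FreeGroup X, ∀ n : VForm P, (nfAct P w n).1.prod = w * n.1.prod := by
    intro w
    induction w using FreeGroup.induction_on with
    | C1 => simp
    | of x => exact h1 x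
    | inv_of x h =>
      intro n
      have := h ((nfAct P (FreeGroup.of x))⁻¹ n)
      rw [map_inv, eq_inv_mul_iff_mul_eq, ← this, ← Equiv.Perm.mul_apply, mul_inv_cancel]
      rfl
    | mul x y hx hy =>
      intro n
      rw [map_mul, Equiv.Perm.mul_apply, hx, hy, mul_assoc]
  refine ⟨(nfAct P w ⟨(1, []), List.isChain_nil⟩).1, (nfAct P w _).2, ?_⟩
  rw [h]; simp [NForm.prod]

/-- A word in letters satisfying `P` has a normal form without nontrivial syllables from `Rest P`. -/
theorem exists_nf_pure (L : List (X × Bool)) (hL : ∀ a ∈ L, P a.1) :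
    ∃ n : NForm P, NValid n.2 ∧ n.prod = FreeGroup.mk L ∧ n.1 = 1 ∧ ∀ a ∈ n.2, a.2 = 1 := by
  induction L with
  | nil => exact ⟨(1, []), List.isChain_nil, by simp [NForm.prod, FreeGroup.one_eq_mk], rfl, by simp⟩
  | cons b L ih =>
    obtain ⟨⟨f, M⟩, h1, h2, h3, h4⟩ := ih fun a ha => hL a (List.mem_cons_of_mem _ ha)
    refine ⟨NForm.mulL (⟨b.1, hL b (by simp)⟩, b.2) (f, M), NForm.valid_mulL _ _ h1, ?_, ?_⟩
    · rw [NForm.prod_mulL, h2]; simp [sletter]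
    · subst h3
      obtain _ | ⟨a, M⟩ := M
      · simp [NForm.mulL]
      · simp only [NForm.mulL]
        split_ifs
        · exact ⟨h4 a (by simp), fun c hc => h4 c (by simp [hc])⟩
        · refine ⟨rfl, fun c hc => ?_⟩
          simp only [List.mem_cons] at hc
          rcases hc with rfl | hc
          · rfl
          · exact h4 c (by simpa using hc)

variable (U V : {x // P x} → Rest P) (k : Rest P)

/-- The syllable created to the left of a signed letter by `x ↦ U x * x * V x`. -/
def lft (l : {x // P x} × Bool) : Rest P := if l.2 then U l.1 else (V l.1)⁻¹

/-- The syllable created to the right of a signed letter by `x ↦ U x * x * V x`. -/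
def rgt (l : {x // P x} × Bool) : Rest P := if l.2 then V l.1 else (U l.1)⁻¹

theorem rgt_mul_lft (l : {x // P x} × Bool) : rgt U V l * lft U V (l.1, !l.2) = 1 := by
  obtain ⟨x, _ | _⟩ := l <;> simp [rgt, lft]

/-- Normal form of `β w * k`, in terms of the one of `w`, where `β` fixes `Rest P` and maps `x`
to `U x * x * V x` when `P x` holds. -/
def nfMap : Rest P → List (({x // P x} × Bool) × Rest P) → NForm P
  | f, [] => (f * k, [])
  | f, a :: L => (f * lft U V a.1, (a.1, rgt U V a.1 * (nfMap a.2 L).1) :: (nfMap a.2 L).2)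

theorem nfMap_prod (B : FreeGroup X →* FreeGroup X) (hB : ∀ r ∈ Rest P, B r = r)
    (hU : ∀ x : {x // P x}, B (FreeGroup.of x.1) = U x * FreeGroup.of x.1 * V x)
    (f : Rest P) (L : List (({x // P x} × Bool) × Rest P)) :
    (nfMap U V k f L).prod = B (NForm.prod (f, L)) * k := by
  have hs : ∀ l : {x // P x} × Bool, B (sletter l) = lft U V l * sletter l * rgt U V l := by
    rintro ⟨x, _ | _⟩
    · have : sletter (x, false) = (FreeGroup.of x.1)⁻¹ := sletter_not (x, true)
      rw [this, map_inv, hU]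
      simp [lft, rgt, mul_assoc]
    · rw [sletter_true, hU]
      simp [lft, rgt]
  induction L generalizing f with
  | nil => simp [nfMap, NForm.prod, hB]
  | cons a L ih =>
    have h := ih a.2
    simp only [NForm.prod, nfMap, List.map_cons, List.prod_cons, map_mul, mul_assoc,
      Subgroup.coe_mul, hs, hB _ f.2] at h ⊢
    rw [h]

theorem nfMap_valid (f : Rest P) (L : List (({x // P x} × Bool) × Rest P)) (hL : NValid L) :
    NValid (nfMap U V k f L).2 := by
  induction L generalizing f with
  | nil => exact List.isChain_nil
  | cons a L ih =>
    obtain _ | ⟨b, L⟩ := L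
    · exact List.isChain_singleton _
    · have h1 := ih a.2 hL.tail
      have h2 := (List.isChain_cons_cons.mp hL).1
      simp only [nfMap] at h1 ⊢
      refine List.isChain_cons_cons.mpr ⟨?_, h1⟩
      simp only
      rintro ⟨h3, h4⟩
      refine h2 ⟨?_, h4⟩
      rw [h4, ← mul_assoc, mul_eq_one_iff_eq_inv] at h3
      have h5 := rgt_mul_lft U V a.1
      rw [mul_eq_one_iff_eq_inv] at h5
      rw [← h5] at h3
      simpa using h3

/-- Twisting automorphisms fix only `Rest P`, if all their syllables are nontrivial. -/
theorem mem_rest_of_fixed (B : FreeGroup X →* FreeGroup X) (hB : ∀ r ∈ Rest P, B r = r)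
    (hU : ∀ x : {x // P x}, B (FreeGroup.of x.1) = U x * FreeGroup.of x.1 * V x)
    (hU1 : ∀ x, U x ≠ 1) (hV1 : ∀ x, V x ≠ 1) (w : FreeGroup X) (hw : B w = w) :
    w ∈ Rest P := by
  obtain ⟨⟨f, L⟩, hn, rfl⟩ := exists_nf (P := P) w
  obtain _ | ⟨⟨l, g⟩, L⟩ := L
  · simp [NForm.prod]
  · exfalso
    have h1 := nfMap_prod U V 1 B hB hU f ((l, g) :: L)
    rw [hw] at h1
    have h2 := prod_inj (nfMap_valid U V 1 f _ hn) hn (by simpa using h1)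
    have h3 := congrArg Prod.fst h2
    simp only [nfMap, mul_eq_left] at h3
    obtain ⟨x, _ | _⟩ := l
    · simp [lft, hV1] at h3
    · simp [lft, hU1] at h3

/-- A letter equal to `u x v`, with `u` and `v` words in the other letters, has `u` and `v` trivial. -/
theorem trivial_of_fixed (x : {x // P x}) (u v : Rest P)
    (h : (u : FreeGroup X) * FreeGroup.of x.1 * v = FreeGroup.of x.1) : u = 1 ∧ v = 1 := by
  have h2 := prod_inj (P := P) (n := (u, [((x, true), v)])) (m := (1, [((x, true), 1)]))
    (List.isChain_singleton _) (List.isChain_singleton _) (by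
      simpa [NForm.prod, sletter_true, mul_assoc] using h)
  simp only [Prod.mk.injEq, List.cons.injEq, and_true, true_and] at h2
  exact h2

/-- If `B w = h * w * k` where `w` is a word in letters satisfying `P` then `w` has length at most
one, if `B` does not produce cancellations. -/
theorem pin_rigid (B : FreeGroup X →* FreeGroup X) (hB : ∀ r ∈ Rest P, B r = r)
    (hU : ∀ x : {x // P x}, B (FreeGroup.of x.1) = U x * FreeGroup.of x.1 * V x)
    (hUV : ∀ l m, rgt U V l * lft U V m = 1 → m = (l.1, !l.2))
    (L : List (X × Bool)) (hL : ∀ a ∈ L, P a.1) (h : Rest P)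
    (hw : B (FreeGroup.mk L) = h * FreeGroup.mk L * k) :
    FreeGroup.mk L = 1 ∨ ∃ x, P x ∧ ∃ b, FreeGroup.mk L = FreeGroup.mk [(x, b)] := by
  obtain ⟨⟨f, M⟩, hn, h2, h3, h4⟩ := exists_nf_pure L hL
  simp only at h3
  subst h3
  rw [← h2] at hw ⊢
  obtain _ | ⟨⟨l, g⟩, _ | ⟨⟨m, g'⟩, M⟩⟩ := M
  · left; simp [NForm.prod]
  · right
    have hg := h4 (l, g) (by simp)
    simp only at hg
    exact ⟨l.1.1, l.1.2, l.2, by simp [NForm.prod, hg, sletter]⟩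
  · exfalso
    have hg := h4 (l, g) (by simp)
    simp only at hg
    subst hg
    have e1 := nfMap_prod U V 1 B hB hU 1 ((l, 1) :: (m, g') :: M)
    have e2 := nfMap_prod (P := P) 1 1 k (MonoidHom.id _) (fun _ _ => rfl) (by simp) h
      ((l, 1) :: (m, g') :: M)
    have e3 : B (NForm.prod (1, (l, 1) :: (m, g') :: M)) * ((1 : Rest P) : FreeGroup X) =
        (MonoidHom.id _) (NForm.prod (h, (l, 1) :: (m, g') :: M)) * k := by
      rw [hw]; simp [NForm.prod]
    rw [← e1, ← e2] at e3
    have e4 := prod_inj (nfMap_valid U V 1 1 _ hn) (nfMap_valid 1 1 k h _ hn) e3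
    have e5 := congrArg Prod.snd e4
    simp only [nfMap, List.cons.injEq, Prod.mk.injEq, true_and] at e5
    have e6 := e5.1
    have t1 : ∀ l, rgt (P := P) 1 1 l = 1 := by rintro ⟨x, _ | _⟩ <;> simp [rgt]
    have t2 : ∀ l, lft (P := P) 1 1 l = 1 := by rintro ⟨x, _ | _⟩ <;> simp [lft]
    rw [t1, t2] at e6
    simp only [one_mul, mul_one] at e6
    exact (List.isChain_cons_cons.mp hn).1 ⟨rfl, hUV l m e6⟩
end NF

/-! ### Words, letters and small permutation groups -/

section words
variable {X : Type} [DecidableEq X]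

theorem mem_closure_letters (S : Set X) (w : FreeGroup X) :
    w ∈ Subgroup.closure (FreeGroup.of '' S) ↔ ∀ a ∈ w.toWord, a.1 ∈ S := by
  constructor
  · intro h
    induction h using Subgroup.closure_induction with
    | mem x hx => obtain ⟨x, hx, rfl⟩ := hx; simpa [FreeGroup.toWord_of] using hx
    | one => simp
    | mul x y _ _ hx hy =>
      intro a ha
      have := (FreeGroup.toWord_mul_sublist x y).subset ha
      rcases List.mem_append.mp this with h | h
      · exact hx a h
      · exact hy a h
    | inv x _ hx =>
      intro a ha
      rw [FreeGroup.toWord_inv] at ha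
      simp only [FreeGroup.invRev, List.mem_reverse, List.mem_map] at ha
      obtain ⟨b, hb, rfl⟩ := ha
      exact hx b hb
  · intro h
    rw [← FreeGroup.mk_toWord (x := w)]
    generalize w.toWord = L at h
    induction L with
    | nil => exact Subgroup.one_mem _
    | cons a L ih =>
      rw [mk_cons]
      refine Subgroup.mul_mem _ ?_ (ih fun b hb => h b (by simp [hb]))
      have ha := Subgroup.subset_closure (Set.mem_image_of_mem FreeGroup.of (h a (by simp)))
      obtain ⟨x, _ | _⟩ := a
      · have : FreeGroup.mk [(x, false)] = (FreeGroup.of x)⁻¹ := by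
          simp [FreeGroup.of, FreeGroup.inv_mk, FreeGroup.invRev]
        rw [this]; exact Subgroup.inv_mem _ ha
      · exact ha

theorem mem_rest_iff (P : X → Prop) (w : FreeGroup X) :
    w ∈ Rest P ↔ ∀ a ∈ w.toWord, ¬ P a.1 := mem_closure_letters _ w

theorem toWord_permAut (σ : Equiv.Perm X) (w : FreeGroup X) :
    (permAut X σ w).toWord = w.toWord.map fun a => (σ a.1, a.2) := by
  have hr : FreeGroup.IsReduced (w.toWord.map fun a => (σ a.1, a.2)) := by
    have := FreeGroup.isReduced_toWord (x := w)
    unfold FreeGroup.IsReduced at this ⊢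
    rw [List.isChain_map]
    simpa using this
  rw [permAut_apply]
  conv_lhs => rw [← FreeGroup.mk_toWord (x := w)]
  rw [FreeGroup.map.mk, FreeGroup.toWord_mk, hr.reduce_eq]

/-- A word fixed by a permutation of the letters involves only fixed letters. -/
theorem letters_fixed (σ : Equiv.Perm X) (w : FreeGroup X) (h : permAut X σ w = w) :
    ∀ a ∈ w.toWord, σ a.1 = a.1 := by
  have h2 := toWord_permAut σ w
  rw [h] at h2
  intro a ha
  have h3 : w.toWord.map (fun a => (σ a.1, a.2)) = w.toWord.map id := by rw [← h2]; simp
  have := List.map_inj_left.mp h3 a ha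
  exact congrArg Prod.fst this

theorem eq_one_of_no_letters (w : FreeGroup X) (h : ∀ a ∈ w.toWord, False) : w = 1 := by
  rw [← FreeGroup.toWord_eq_nil_iff]
  exact List.eq_nil_iff_forall_not_mem.mpr h

omit [DecidableEq X] in
theorem of_zpow_inj {a b : X} {n m : ℤ} (hn : n ≠ 0)
    (h : FreeGroup.of a ^ n = FreeGroup.of b ^ m) : a = b ∧ n = m := by
  classical
  have h1 := congrArg (FreeGroup.lift fun x => if x = a then Multiplicative.ofAdd (1 : ℤ) else 1) h
  simp only [map_zpow, FreeGroup.lift_apply_of, if_true] at h1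
  by_cases hab : b = a
  · rw [if_pos hab] at h1
    have h2 := congrArg Multiplicative.toAdd h1
    simp only [toAdd_zpow, toAdd_ofAdd, smul_eq_mul, mul_one] at h2
    exact ⟨hab.symm, h2⟩
  · rw [if_neg hab] at h1
    have h2 := congrArg Multiplicative.toAdd h1
    simp at h2
    exact absurd h2 hn

omit [DecidableEq X] in
theorem zpow_eq_one_iff' (w : FreeGroup X) (n : ℤ) (h : w ^ n = 1) : w = 1 ∨ n = 0 := by
  by_cases hn : n = 0
  · exact Or.inr hn
  · left
    exact (IsMulTorsionFree.zpow_eq_one_iff_left hn).mp h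
end words

theorem perm4_centralizer : ∀ ω : Fin 4, ∀ τ : Equiv.Perm (Fin 4),
    (∀ σ : Equiv.Perm (Fin 4), σ ω = ω → τ * σ = σ * τ) → τ = 1 := by
  decide +kernel

theorem perm4_stabilizer : ∀ ω ω' : Fin 4, (∀ σ : Equiv.Perm (Fin 4), σ ω = ω → σ ω' = ω') →
    ω' = ω := by
  decide +kernel

theorem perm3_center : ∀ τ : Equiv.Perm (Fin 3),
    (∀ σ : Equiv.Perm (Fin 3), τ * σ = σ * τ) → τ = 1 := by
  decide +kernel

/-! ### Twisting automorphisms and the associated group -/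

section twist
variable {P A J : Type} [Group A]

/-- `A` acts on the letters `P × A` by left translation of the second coordinate. -/
def rotX (P A : Type) [Group A] : A →* Equiv.Perm (P × A) where
  toFun g := (Equiv.refl P).prodCongr (Equiv.mulLeft g)
  map_one' := by ext x <;> simp
  map_mul' g h := by ext x <;> simp [mul_assoc]

@[simp] theorem rotX_apply (g : A) (x : P × A) : rotX P A g x = (x.1, g * x.2) := rfl

/-- The action of `A` on the free group on `P × A`. -/
def rot : A →* MulAut (FreeGroup (P × A)) := (permAut (P × A)).comp (rotX P A)

theorem rot_of (g : A) (x : P × A) : rot g (FreeGroup.of x) = FreeGroup.of (x.1, g * x.2) := by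
  simp [rot]

/-- The subgroup generated by the letters of class different from `c`. -/
abbrev RestOf (A : Type) (c : P) : Subgroup (FreeGroup (P × A)) := Rest fun x => x.1 = c

omit [Group A] in
theorem of_mem_rest {c : P} {x : P × A} (h : x.1 ≠ c) : FreeGroup.of x ∈ RestOf A c :=
  Subgroup.subset_closure ⟨x, h, rfl⟩

theorem rot_mem_rest {c : P} (g : A) {w : FreeGroup (P × A)} (hw : w ∈ RestOf A c) :
    rot g w ∈ RestOf A c := by
  induction hw using Subgroup.closure_induction with
  | mem x hx =>
    obtain ⟨x, hx, rfl⟩ := hx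
    rw [rot_of]
    exact of_mem_rest hx
  | one => simp
  | mul x y _ _ hx hy => rw [map_mul]; exact Subgroup.mul_mem _ hx hy
  | inv x _ hx => rw [map_inv]; exact Subgroup.inv_mem _ hx

open Classical in
/-- The endomorphism mapping a letter `(c, g)` to `(g • u) (c, g) (g • v)` and fixing letters of
other classes. -/
noncomputable def twistHom (c : P) (u v : FreeGroup (P × A)) :
    FreeGroup (P × A) →* FreeGroup (P × A) :=
  FreeGroup.lift fun x => if x.1 = c then rot x.2 u * FreeGroup.of x * rot x.2 v
    else FreeGroup.of x

theorem twistHom_of (c : P) (u v : FreeGroup (P × A)) (x : P × A) (h : x.1 = c) :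
    twistHom c u v (FreeGroup.of x) = rot x.2 u * FreeGroup.of x * rot x.2 v := by
  rw [twistHom, FreeGroup.lift_apply_of, if_pos h]

theorem twistHom_of_ne (c : P) (u v : FreeGroup (P × A)) (x : P × A) (h : x.1 ≠ c) :
    twistHom c u v (FreeGroup.of x) = FreeGroup.of x := by
  rw [twistHom, FreeGroup.lift_apply_of, if_neg h]

theorem twistHom_rest (c : P) (u v : FreeGroup (P × A)) {w : FreeGroup (P × A)}
    (hw : w ∈ RestOf A c) : twistHom c u v w = w := by
  have : RestOf A c ≤ (twistHom c u v).eqLocus (MonoidHom.id _) := by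
    rw [RestOf, Rest, Subgroup.closure_le]
    rintro _ ⟨x, hx, rfl⟩
    exact twistHom_of_ne c u v x hx
  exact this hw

theorem twistHom_inv (c : P) {u v : FreeGroup (P × A)} (hu : u ∈ RestOf A c)
    (hv : v ∈ RestOf A c) : (twistHom c u v).comp (twistHom c u⁻¹ v⁻¹) = MonoidHom.id _ := by
  ext x
  simp only [MonoidHom.comp_apply, MonoidHom.id_apply]
  by_cases h : x.1 = c
  · rw [twistHom_of _ _ _ _ h, map_mul, map_mul, twistHom_of _ _ _ _ h,
      twistHom_rest _ _ _ (rot_mem_rest _ (Subgroup.inv_mem _ hu)),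
      twistHom_rest _ _ _ (rot_mem_rest _ (Subgroup.inv_mem _ hv))]
    simp [mul_assoc]
  · rw [twistHom_of_ne _ _ _ _ h, twistHom_of_ne _ _ _ _ h]

/-- Data of finitely many twisting automorphisms. -/
structure TwistData (P A J : Type) [Group A] where
  /-- class of the letters moved by a twist -/
  cls : J → P
  /-- left multiplier -/
  u : J → FreeGroup (P × A)
  /-- right multiplier -/
  v : J → FreeGroup (P × A)
  hu : ∀ j, u j ∈ RestOf A (cls j)
  hv : ∀ j, v j ∈ RestOf A (cls j)

namespace TwistData
variable (D : TwistData P A J)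

/-- The twisting automorphism. -/
noncomputable def beta (j : J) : MulAut (FreeGroup (P × A)) :=
  MonoidHom.toMulEquiv (twistHom (D.cls j) (D.u j) (D.v j))
    (twistHom (D.cls j) (D.u j)⁻¹ (D.v j)⁻¹)
    (by
      have := twistHom_inv (D.cls j) (Subgroup.inv_mem _ (D.hu j)) (Subgroup.inv_mem _ (D.hv j))
      rwa [inv_inv, inv_inv] at this)
    (twistHom_inv (D.cls j) (D.hu j) (D.hv j))

theorem beta_apply (j : J) (w) : D.beta j w = twistHom (D.cls j) (D.u j) (D.v j) w := rfl

theorem beta_rest (j : J) {w} (hw : w ∈ RestOf A (D.cls j)) : D.beta j w = w :=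
  twistHom_rest _ _ _ hw

theorem beta_of (j : J) (x : P × A) (h : x.1 = D.cls j) :
    D.beta j (FreeGroup.of x) = rot x.2 (D.u j) * FreeGroup.of x * rot x.2 (D.v j) :=
  twistHom_of _ _ _ _ h

theorem beta_zpow_rest (j : J) (n : ℤ) {w} (hw : w ∈ RestOf A (D.cls j)) :
    (D.beta j ^ n) w = w := by
  have : D.beta j ∈ MulAction.stabilizer (MulAut (FreeGroup (P × A))) w := D.beta_rest j hw
  exact Subgroup.zpow_mem _ this n

/-- The multipliers of a twist are fixed by it, so the multipliers of its powers are their powers. -/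
theorem beta_zpow_of (j : J) (n : ℤ) (x : P × A) (h : x.1 = D.cls j) :
    (D.beta j ^ n) (FreeGroup.of x) =
      rot x.2 (D.u j) ^ n * FreeGroup.of x * rot x.2 (D.v j) ^ n := by
  have e1 := rot_mem_rest x.2 (D.hu j)
  have e2 := rot_mem_rest x.2 (D.hv j)
  have h1 : ∀ m : ℤ, (D.beta j ^ m) (FreeGroup.of x) =
      rot x.2 (D.u j) ^ m * FreeGroup.of x * rot x.2 (D.v j) ^ m →
      (D.beta j ^ (m + 1)) (FreeGroup.of x) =
      rot x.2 (D.u j) ^ (m + 1) * FreeGroup.of x * rot x.2 (D.v j) ^ (m + 1) := by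
    intro m hm
    rw [zpow_add_one, MulAut.mul_apply, D.beta_of j x h, map_mul, map_mul, hm,
      D.beta_zpow_rest j m e1, D.beta_zpow_rest j m e2]
    rw [zpow_add_one, zpow_add_one, ← (Commute.refl (rot x.2 (D.u j))).zpow_right m |>.eq]
    simp only [mul_assoc]
  have h2 : ∀ m : ℤ, (D.beta j ^ m) (FreeGroup.of x) =
      rot x.2 (D.u j) ^ m * FreeGroup.of x * rot x.2 (D.v j) ^ m →
      (D.beta j ^ (m - 1)) (FreeGroup.of x) =
      rot x.2 (D.u j) ^ (m - 1) * FreeGroup.of x * rot x.2 (D.v j) ^ (m - 1) := by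
    intro m hm
    have h3 : FreeGroup.of x =
        rot x.2 (D.u j) * (D.beta j)⁻¹ (FreeGroup.of x) * rot x.2 (D.v j) := by
      have h4 := congrArg (fun z => (D.beta j)⁻¹ z) (D.beta_of j x h)
      have e3 := D.beta_zpow_rest j (-1) e1
      have e4 := D.beta_zpow_rest j (-1) e2
      rw [zpow_neg_one] at e3 e4
      rw [map_mul, map_mul, e3, e4] at h4
      rw [← h4]; simp
    have h5 : (D.beta j)⁻¹ (FreeGroup.of x) =
        (rot x.2 (D.u j))⁻¹ * FreeGroup.of x * (rot x.2 (D.v j))⁻¹ := by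
      conv_rhs => rw [h3]
      simp [mul_assoc]
    rw [zpow_sub_one, MulAut.mul_apply, h5, map_mul, map_mul, hm,
      D.beta_zpow_rest j m (Subgroup.inv_mem _ e1), D.beta_zpow_rest j m (Subgroup.inv_mem _ e2)]
    rw [zpow_sub_one, zpow_sub_one,
      ((Commute.refl (rot x.2 (D.u j))).inv_right.zpow_left m).eq]
    simp only [mul_assoc]
  induction n using Int.induction_on with
  | zero => simp
  | succ n ih => exact h1 n ih
  | pred n ih => exact h2 _ ih

theorem beta_rot (j : J) (g : A) (w) : D.beta j (rot g w) = rot g (D.beta j w) := by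
  have : (D.beta j).toMonoidHom.comp (rot g).toMonoidHom =
      (rot g).toMonoidHom.comp (D.beta j).toMonoidHom := by
    ext x
    simp only [MonoidHom.comp_apply, MulEquiv.toMonoidHom_eq_coe, MonoidHom.coe_coe]
    by_cases h : x.1 = D.cls j
    · rw [rot_of, D.beta_of _ _ h, D.beta_of _ (x.1, g * x.2) h]
      simp [rot_of]
    · rw [rot_of, D.beta_rest _ (of_mem_rest h),
        D.beta_rest _ (of_mem_rest (x := (x.1, g * x.2)) h), rot_of]
  exact DFunLike.congr_fun this w

/-- The finite group acting on the letters. -/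
abbrev Fin0 (A J : Type) := A × (J → Equiv.Perm (Fin 4))

/-- The action on the second set of letters. -/
def permY (A J : Type) [Group A] : Fin0 A J →* Equiv.Perm (J × Fin 4) where
  toFun a := ⟨fun y => (y.1, a.2 y.1 y.2), fun y => (y.1, (a.2 y.1)⁻¹ y.2),
    fun y => by simp, fun y => by simp⟩
  map_one' := by ext y <;> simp
  map_mul' a b := by ext y <;> simp

@[simp] theorem permY_apply (a : Fin0 A J) (y : J × Fin 4) :
    permY A J a y = (y.1, a.2 y.1 y.2) := rfl

/-- The group acting on the free group on `P × A`. -/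
abbrev EGroup (A J : Type) [Group A] :=
  FreeGroup (J × Fin 4) ⋊[(permAut (J × Fin 4)).comp (permY A J)] Fin0 A J

/-- The action defining the semidirect product: the letters `(j, ω)` act by the twist `j`. -/
noncomputable def actE : EGroup A J →* MulAut (FreeGroup (P × A)) :=
  SemidirectProduct.lift (FreeGroup.lift fun y => D.beta y.1) (rot.comp (MonoidHom.fst _ _)) (by
    intro a
    ext y : 1
    simp only [MonoidHom.comp_apply, MulEquiv.toMonoidHom_eq_coe, MonoidHom.coe_coe, permAut_of,
      FreeGroup.lift_apply_of, permY_apply, MulAut.conj_apply, MonoidHom.coe_fst]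
    rw [eq_mul_inv_iff_mul_eq]
    ext w : 1
    exact D.beta_rot _ _ _)

/-- The main group attached to the data. -/
abbrev GGroup := FreeGroup (P × A) ⋊[D.actE] EGroup A J

@[simp] theorem actE_y (y : J × Fin 4) : D.actE (SemidirectProduct.inl (FreeGroup.of y)) =
    D.beta y.1 := by simp [actE]

@[simp] theorem actE_a (a : Fin0 A J) : D.actE (SemidirectProduct.inr a) = rot a.1 := by
  simp [actE]

end TwistData
end twist

/-! ### Rigidity of the finite subgroup -/

section sections
open SemidirectProduct

/-- A section of a split extension of a finite group by a free group on which the finite group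
permutes the basis is conjugate to the standard one. -/
theorem conj_section {A X E : Type} [Group A] [Finite A] [Group E] (ψ : E →* MulAut (FreeGroup X))
    (s : A →* FreeGroup X ⋊[ψ] E) (ι : A →* E) (σ : A →* Equiv.Perm X)
    (hι : ∀ a, (s a).right = ι a) (hσ : ∀ a, ψ (ι a) = permAut X (σ a)) :
    ∃ w, ∀ a, s a = inl w * inr (ι a) * (inl w)⁻¹ := by
  obtain ⟨w, hw⟩ := cocycle_trivial σ (fun a => (s a).left) (by
    intro a b
    simp only [map_mul, mul_left, hι, hσ])
  refine ⟨w, fun a => ?_⟩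
  ext
  · simpa [hσ, ← map_inv] using hw a
  · simp [hι]

/-- Elements of finite order of a split extension with free kernel inject in the quotient. -/
theorem eq_one_of_pow_of_right {X E : Type} [Group E] {ψ : E →* MulAut (FreeGroup X)}
    (z : FreeGroup X ⋊[ψ] E) (n : ℕ) (hn : n ≠ 0) (hz : z ^ n = 1) (hr : z.right = 1) : z = 1 := by
  have h1 : z = inl z.left := by
    ext <;> simp [hr]
  rw [h1, ← map_pow] at hz
  have h2 := inl_injective (hz.trans (map_one inl).symm)
  have h3 : z.left = 1 := by
    have := zpow_eq_one_iff' z.left n (by simpa using h2)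
    rcases this with h | h
    · exact h
    · exact absurd (by exact_mod_cast h) hn
  rw [h1, h3, map_one]

end sections

namespace TwistData
open SemidirectProduct
variable {P A J : Type} [Group A] (D : TwistData P A J)

/-- The copy of the finite group inside the main group. -/
noncomputable def ii : Fin0 A J →* D.GGroup := inr.comp inr

theorem ii_apply (a : Fin0 A J) : D.ii a = inr (inr a) := rfl

/-- It suffices to treat endomorphisms restricting to the identity on the finite group. An injective
endomorphism, composed with a suitable inner automorphism, restricts to an automorphism of the finite
group, and the power whose exponent is the order of this automorphism fixes the finite group. -/
theorem coHopfian_of_fix [Finite A] [Finite J]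
    (H : ∀ χ : D.GGroup →* D.GGroup, Function.Injective χ → (∀ a, χ (D.ii a) = D.ii a) →
      Function.Surjective χ) : IsCoHopfian D.GGroup := by
  intro φ hφ
  have hii : Function.Injective D.ii := fun a b h => inr_injective (inr_injective h)
  let α : Fin0 A J →* Fin0 A J := rightHom.comp (rightHom.comp (φ.comp D.ii))
  have hα : Function.Injective α := by
    rw [injective_iff_map_eq_one]
    intro a ha
    have ho : (φ (D.ii a)) ^ Nat.card (Fin0 A J) = 1 := by
      rw [← map_pow, ← map_pow, pow_card_eq_one', map_one, map_one]
    have h1 : (φ (D.ii a)).right = 1 := by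
      refine eq_one_of_pow_of_right _ _ (Nat.card_pos (α := Fin0 A J)).ne' ?_ ha
      have := congrArg rightHom ho
      rwa [map_pow, map_one] at this
    have h2 := eq_one_of_pow_of_right _ _ Nat.card_pos.ne' ho h1
    exact hii (hφ (by rw [h2, map_one, map_one]))
  have hαb : Function.Bijective α := Finite.injective_iff_bijective.1 hα
  let αe : MulAut (Fin0 A J) := MulEquiv.ofBijective α hαb
  let s : Fin0 A J →* D.GGroup := (φ.comp D.ii).comp (αe⁻¹ : MulAut (Fin0 A J)).toMonoidHom
  have hs : ∀ a, s (αe a) = φ (D.ii a) := by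
    intro a
    change φ (D.ii (αe⁻¹ (αe a))) = _
    rw [MulAut.inv_apply_self]
  have hsr : ∀ a, (s a).right.right = a := by
    intro a
    obtain ⟨b, rfl⟩ := αe.surjective a
    rw [hs]; rfl
  obtain ⟨w1, h1⟩ := conj_section _ (rightHom.comp s) (MonoidHom.id _) (permY A J)
    (fun a => hsr a) (fun a => rfl)
  let s1 : Fin0 A J →* D.GGroup := (MulAut.conj (inr (inl w1))⁻¹).toMonoidHom.comp s
  have hs1 : ∀ a, (s1 a).right = inr a := by
    intro a
    have := h1 a
    simp only [MonoidHom.comp_apply, rightHom_eq_right, MonoidHom.id_apply] at this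
    simp only [s1, MonoidHom.comp_apply, MulEquiv.toMonoidHom_eq_coe, MonoidHom.coe_coe,
      MulAut.conj_apply, mul_right, inv_right, right_inr, inv_inv, this]
    group
  obtain ⟨w2, h2⟩ := conj_section _ s1 inr ((rotX P A).comp (MonoidHom.fst _ _)) hs1
    (fun a => by rw [D.actE_a]; rfl)
  let c : MulAut D.GGroup := MulAut.conj ((inl w2)⁻¹ * (inr (inl w1))⁻¹)
  let ξ : Monoid.End D.GGroup := c.toMonoidHom.comp φ
  have hξ : ∀ a, ξ (D.ii a) = D.ii (αe a) := by
    intro a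
    change c (φ (D.ii a)) = _
    rw [← hs]
    have h3 := h2 (αe a)
    have h4 : s1 (αe a) = (inr (inl w1))⁻¹ * s (αe a) * inr (inl w1) := by
      simp [s1]
    have h5 : s (αe a) = inr (inl w1) * s1 (αe a) * (inr (inl w1))⁻¹ := by rw [h4]; group
    rw [h5, h3, MulAut.conj_apply, ii_apply]
    group
  have hξi : Function.Injective ξ := c.injective.comp hφ
  have hpow : ∀ n : ℕ, Function.Injective (ξ ^ n : Monoid.End D.GGroup) ∧
      ∀ a, (ξ ^ n : Monoid.End D.GGroup) (D.ii a) = D.ii ((αe ^ n) a) := by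
    intro n
    induction n with
    | zero => exact ⟨fun _ _ h => h, fun a => rfl⟩
    | succ n ih =>
      rw [pow_succ', pow_succ']
      refine ⟨hξi.comp ih.1, fun a => ?_⟩
      change ξ ((ξ ^ n : Monoid.End D.GGroup) _) = _
      rw [ih.2, hξ]; rfl
  have : Finite (MulAut (Fin0 A J)) :=
    Finite.of_injective (fun f : MulAut (Fin0 A J) => (f : Fin0 A J → Fin0 A J))
      DFunLike.coe_injective
  obtain ⟨m, hm⟩ : ∃ m, orderOf αe = m + 1 := ⟨_, (Nat.succ_pred_eq_of_pos (orderOf_pos αe)).symm⟩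
  have hsurj := H (ξ ^ orderOf αe : Monoid.End D.GGroup) (hpow _).1 (fun a =>
    ((hpow _).2 a).trans (by rw [pow_orderOf_eq_one]; rfl))
  have hξs : Function.Surjective ξ := by
    rw [hm, pow_succ'] at hsurj
    exact Function.Surjective.of_comp hsurj
  intro y
  obtain ⟨x, hx⟩ := hξs (c y)
  exact ⟨x, c.injective hx⟩

end TwistData

/-! ### Centralizers -/

namespace TwistData
open SemidirectProduct
variable {P A J : Type} [Group A] (D : TwistData P A J)

/-- The conditions on the data making the main group co-Hopfian. -/
structure Rigid where
  /-- the index of the twist pinning the letters of a class -/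
  pin : P → J
  cls_pin : ∀ p, D.cls (pin p) = p
  /-- both multipliers of the pinning twist are one letter of another class -/
  pin_ne : ∀ p, ∃ p', p' ≠ p ∧ D.u (pin p) = FreeGroup.of (p', 1) ∧
    D.v (pin p) = FreeGroup.of (p', 1)
  nontriv : ∀ j, D.u j ≠ 1 ∨ D.v j ≠ 1
  /-- equivariant homomorphisms to `A` invariant under the twists are trivial -/
  hom_trivial : ∀ f : FreeGroup (P × A) →* A, (∀ g w, f (rot g w) = g * f w * g⁻¹) →
    (∀ j w, f (D.beta j w) = f w) → ∀ w, f w = 1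
  ne_one : ∃ g : A, g ≠ 1
  center : ∀ g : A, (∀ h, g * h = h * g) → g = 1

theorem left_comm (z : D.GGroup) (a : Fin0 A J) (h : z * D.ii a = D.ii a * z) :
    rot a.1 z.left = z.left := by
  have := congrArg SemidirectProduct.left h
  rw [mul_left, mul_left, ii_apply, right_inr, actE_a] at this
  simpa using this.symm

theorem right_left_comm (z : D.GGroup) (a : Fin0 A J) (h : z * D.ii a = D.ii a * z) :
    permAut _ (permY A J a) z.right.left = z.right.left := by
  have := congrArg (fun z => z.right.left) h
  simpa [ii_apply] using this.symm

theorem right_right_comm (z : D.GGroup) (a : Fin0 A J) (h : z * D.ii a = D.ii a * z) :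
    z.right.right * a = a * z.right.right := by
  have := congrArg (fun z => z.right.right) h
  simpa [ii_apply] using this

variable {D}

open Classical in
theorem exists_perm (j : J) (σ : Equiv.Perm (Fin 4)) (i : J) :
    (Pi.mulSingle j σ : J → Equiv.Perm (Fin 4)) i = if i = j then σ else 1 := by
  by_cases h : i = j
  · subst h; simp
  · simp [h]

/-- An element centralized by the stabilizer of a letter `(j, ω)` is a power of this letter. -/
theorem eq_zpow_of_comm (R : D.Rigid) (y : J × Fin 4) (z : D.GGroup)
    (hz : ∀ a : Fin0 A J, a.2 y.1 y.2 = y.2 → z * D.ii a = D.ii a * z) :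
    ∃ l : ℤ, z = inr (inl (FreeGroup.of y ^ l)) := by
  classical
  have hl : z.left = 1 := by
    refine eq_one_of_no_letters _ fun a ha => ?_
    obtain ⟨g, hg⟩ := R.ne_one
    have := letters_fixed (rotX P A g) z.left (D.left_comm z (g, 1) (hz _ (by simp))) a ha
    have := congrArg Prod.snd this
    exact hg (by simpa using this)
  have hrl : z.right.left ∈ Subgroup.closure (FreeGroup.of '' {y}) := by
    rw [mem_closure_letters]
    intro b hb
    have key : ∀ σ : Equiv.Perm (Fin 4), (b.1.1 = y.1 → σ y.2 = y.2) → σ b.1.2 = b.1.2 := by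
      intro σ hσ
      have := letters_fixed _ _ (D.right_left_comm z (1, Pi.mulSingle b.1.1 σ) (hz _ (by
        simp only [exists_perm]
        split_ifs with h
        · exact hσ h.symm
        · rfl))) b hb
      have := congrArg Prod.snd this
      simpa using this
    have h1 : b.1.1 = y.1 := by
      by_contra h
      have h2 := key (finRotate 4) (fun h' => absurd h' h)
      revert h2
      generalize b.1.2 = ω
      revert ω
      decide
    exact Prod.ext h1 (perm4_stabilizer _ _ fun σ hσ => key σ fun _ => hσ)
  have hrr : z.right.right = 1 := by
    ext1
    · refine R.center _ fun h => ?_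
      exact congrArg Prod.fst (D.right_right_comm z (h, 1) (hz _ (by simp)))
    · funext j
      refine perm4_centralizer y.2 _ fun σ hσ => ?_
      have := congrArg Prod.snd (D.right_right_comm z (1, Pi.mulSingle j σ) (hz _ (by
        simp only [exists_perm]
        split_ifs with h
        · exact hσ
        · rfl)))
      have := congrFun this j
      simpa using this
  rw [Set.image_singleton, ← Subgroup.zpowers_eq_closure, Subgroup.mem_zpowers_iff] at hrl
  obtain ⟨l, hl'⟩ := hrl
  refine ⟨l, ?_⟩
  ext1
  · rw [left_inr, hl]
  · ext1
    · rw [right_inr, left_inl, hl']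
    · rw [right_inr, right_inl, hrr]

/-- An element centralized by the permutations of the second alphabet lies in the product of the free
kernel and `A`. -/
theorem eq_of_comm_perm (z : D.GGroup)
    (hz : ∀ a : Fin0 A J, a.1 = 1 → z * D.ii a = D.ii a * z) :
    z = inl z.left * D.ii (z.right.right.1, 1) := by
  classical
  have hrl : z.right.left = 1 := by
    refine eq_one_of_no_letters _ fun b hb => ?_
    have := letters_fixed _ _ (D.right_left_comm z (1, fun _ => finRotate 4) (hz _ rfl)) b hb
    have h2 := congrArg Prod.snd this
    simp only [permY_apply] at h2
    revert h2
    generalize b.1.2 = ω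
    revert ω
    decide
  have hrr : z.right.right.2 = 1 := by
    funext j
    refine perm4_centralizer 0 _ fun σ hσ => ?_
    have := congrArg Prod.snd (D.right_right_comm z (1, fun _ => σ) (hz _ rfl))
    exact congrFun this j
  ext1
  · simp [ii_apply]
  · ext1
    · simp [hrl, ii_apply]
    · ext1
      · simp [ii_apply]
      · simp [hrr, ii_apply]

end TwistData

/-! ### Endomorphisms fixing the finite subgroup -/

namespace TwistData
open SemidirectProduct
variable {P A J : Type} [Group A] {D : TwistData P A J}

theorem inl_commutes_ii (w : FreeGroup (P × A)) (a : Fin0 A J) (ha : a.1 = 1) :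
    (inl w : D.GGroup) * D.ii a = D.ii a * inl w := by
  have h : (inl (D.actE (inr a) w) : D.GGroup) = _ := inl_aut (inr a) w
  rw [actE_a, ha, map_one, MulAut.one_apply, map_inv] at h
  rw [ii_apply]
  exact eq_mul_inv_iff_mul_eq.1 h

theorem letter_commutes_ii (y : J × Fin 4) (a : Fin0 A J) (ha : a.2 y.1 y.2 = y.2) :
    (inr (inl (FreeGroup.of y)) : D.GGroup) * D.ii a = D.ii a * inr (inl (FreeGroup.of y)) := by
  have h : (inl (((permAut _).comp (permY A J)) a (FreeGroup.of y)) : EGroup A J) = _ :=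
    inl_aut a (FreeGroup.of y)
  rw [MonoidHom.comp_apply, permAut_of, map_inv] at h
  rw [ii_apply, ← map_mul, ← map_mul]
  congr 1
  refine eq_mul_inv_iff_mul_eq.1 ?_
  rw [← h, permY_apply, ha]

variable (χ : D.GGroup →* D.GGroup) (hfix : ∀ a, χ (D.ii a) = D.ii a)
include hfix

/-- The centralizer of the stabilizer of a letter consists of powers of this letter. -/
theorem fix_letter (R : D.Rigid) (y : J × Fin 4) :
    ∃ l : ℤ, χ (inr (inl (FreeGroup.of y))) = inr (inl (FreeGroup.of y ^ l)) := by
  refine eq_zpow_of_comm R y _ fun a ha => ?_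
  rw [← hfix a, ← map_mul, ← map_mul, letter_commutes_ii y a ha]

/-- The free kernel commutes with the permutations of the second alphabet, so it is mapped to the
product of the free kernel and `A`; the component in `A` is an equivariant homomorphism invariant
under the twists, hence trivial. -/
theorem fix_base (R : D.Rigid) : ∃ η : FreeGroup (P × A) →* FreeGroup (P × A),
    (∀ w, χ (inl w) = inl (η w)) := by
  have h1 : ∀ w, χ (inl w) = inl (χ (inl w)).left * D.ii ((χ (inl w)).right.right.1, 1) := by
    intro w
    refine eq_of_comm_perm _ fun a ha => ?_
    rw [← hfix a, ← map_mul, ← map_mul, inl_commutes_ii w a ha]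
  let lam : FreeGroup (P × A) →* A :=
    (MonoidHom.fst _ _).comp (rightHom.comp (rightHom.comp (χ.comp inl)))
  have h2 : ∀ w, lam w = 1 := by
    refine R.hom_trivial lam ?_ ?_
    · intro g w
      have h : (inl (D.actE (inr (g, 1)) w) : D.GGroup) = _ := inl_aut (inr (g, 1)) w
      rw [actE_a, map_inv] at h
      have h' := congrArg χ h
      rw [map_mul, map_mul, map_inv] at h'
      have h3 := hfix (g, 1)
      rw [ii_apply] at h3
      rw [h3] at h'
      have h4 := congrArg (fun z => z.right.right.1) h'
      change (χ (inl ((rot g) w))).right.right.1 =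
        g * (χ (inl w)).right.right.1 * g⁻¹
      simpa using h4
    · intro j w
      have h : (inl (D.actE (inl (FreeGroup.of (j, 0))) w) : D.GGroup) = _ :=
        inl_aut (inl (FreeGroup.of (j, 0))) w
      rw [actE_y, map_inv] at h
      have h' := congrArg χ h
      obtain ⟨l, hl⟩ := fix_letter χ hfix R (j, 0)
      rw [map_mul, map_mul, map_inv, hl] at h'
      have h4 := congrArg (fun z => rightHom (rightHom z)) h'
      simp only [map_mul, map_inv, rightHom_inr, rightHom_inl] at h4
      have h5 := congrArg Prod.fst h4
      change (χ (inl ((D.beta j) w))).right.right.1 = (χ (inl w)).right.right.1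
      simpa using h5
  have h3 : ∀ w, χ (inl w) = inl (χ (inl w)).left := by
    intro w
    conv_lhs => rw [h1 w]
    have : (χ (inl w)).right.right.1 = 1 := h2 w
    rw [this]
    have : ((1 : A), (1 : J → Equiv.Perm (Fin 4))) = 1 := rfl
    rw [this, map_one, mul_one]
  refine ⟨MonoidHom.mk' (fun w => (χ (inl w)).left) ?_, h3⟩
  intro a b
  apply inl_injective (φ := D.actE)
  rw [← h3, map_mul, map_mul, map_mul, ← h3, ← h3]

/-- The restriction to the free kernel commutes with the action of `A`. -/
theorem eta_rot (η : FreeGroup (P × A) →* FreeGroup (P × A)) (hη : ∀ w, χ (inl w) = inl (η w))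
    (g : A) (w) : η (rot g w) = rot g (η w) := by
  apply inl_injective (φ := D.actE)
  have h := fun w => (inl_aut (inr (g, 1)) w : (inl (D.actE (inr (g, 1)) w) : D.GGroup) = _)
  simp only [actE_a, map_inv] at h
  have h3 := hfix (g, 1)
  rw [ii_apply] at h3
  rw [← hη, h, h, map_mul, map_mul, map_inv, h3, hη]

omit hfix in
/-- The restriction to the free kernel intertwines a twist with its power by which the endomorphism
replaces the corresponding letter. -/
theorem eta_beta (η : FreeGroup (P × A) →* FreeGroup (P × A)) (hη : ∀ w, χ (inl w) = inl (η w))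
    (y : J × Fin 4) (l : ℤ) (hl : χ (inr (inl (FreeGroup.of y))) = inr (inl (FreeGroup.of y ^ l)))
    (w) : η (D.beta y.1 w) = (D.beta y.1 ^ l) (η w) := by
  apply inl_injective (φ := D.actE)
  have h := (inl_aut (inl (FreeGroup.of y)) w :
    (inl (D.actE (inl (FreeGroup.of y)) w) : D.GGroup) = _)
  have h' := (inl_aut (inl (FreeGroup.of y ^ l)) (η w) :
    (inl (D.actE (inl (FreeGroup.of y ^ l)) (η w)) : D.GGroup) = _)
  rw [actE_y, map_inv] at h
  rw [map_inv, map_zpow, map_zpow, actE_y] at h'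
  rw [← hη, h, h', map_mul, map_mul, map_inv, hl, hη, map_zpow]

end TwistData

/-! ### Rigidity on letters and the co-Hopf property -/

namespace TwistData
open SemidirectProduct
variable {P A J : Type} [Group A] {D : TwistData P A J}

theorem rot_injective (g : A) : Function.Injective (rot g : MulAut (FreeGroup (P × A))) :=
  (rot g).injective

/-- The rotated multiplier as an element of the complementary free factor. -/
def rotMul (c : P) (u : FreeGroup (P × A)) (hu : u ∈ RestOf A c) (l : ℤ)
    (x : {x : P × A // x.1 = c}) : RestOf A c :=
  ⟨rot x.1.2 u ^ l, Subgroup.zpow_mem _ (rot_mem_rest _ hu) l⟩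

theorem rotMul_ne {c : P} {u : FreeGroup (P × A)} (hu : u ∈ RestOf A c) {l : ℤ} (hl : l ≠ 0)
    (h1 : u ≠ 1) (x) : rotMul c u hu l x ≠ 1 := by
  intro h
  have h' := congrArg Subtype.val h
  rcases zpow_eq_one_iff' _ _ h' with h2 | h2
  · exact h1 ((map_eq_one_iff _ (rot_injective x.1.2)).1 h2)
  · exact hl h2

theorem of_zpow_mul_ne {X : Type} {a b : X} {l : ℤ} (hl : l ≠ 0)
    (h : FreeGroup.of a ^ l * FreeGroup.of b ^ l = 1) : False := by
  rw [mul_eq_one_iff_eq_inv, ← zpow_neg] at h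
  have := (of_zpow_inj hl h).2
  omega

/-- Conditions satisfied by the restriction to the free kernel of an endomorphism fixing the
finite group. -/
structure Compat (D : TwistData P A J) (η : FreeGroup (P × A) →* FreeGroup (P × A)) : Prop where
  inj : Function.Injective η
  rot : ∀ g w, η (rot g w) = rot g (η w)
  beta : ∀ j, ∃ l : ℤ, l ≠ 0 ∧ ∀ w, η (D.beta j w) = (D.beta j ^ l) (η w)

variable (R : D.Rigid) (η : FreeGroup (P × A) →* FreeGroup (P × A)) (hη : Compat D η)
include R hη

/-- A letter outside a class is fixed by the twist pinning this class, so its image is fixed by a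
nontrivial power of the same twist and avoids the class. -/
theorem Compat.letter_rest (p'' : P) (x : P × A) (hx : x.1 ≠ p'') :
    η (FreeGroup.of x) ∈ RestOf A p'' := by
  obtain ⟨l, hl, hb⟩ := hη.beta (R.pin p'')
  obtain ⟨p', hp', hu, hv⟩ := R.pin_ne p''
  have hc := R.cls_pin p''
  have hu1 : FreeGroup.of (p', (1 : A)) ∈ RestOf A p'' := of_mem_rest hp'
  have hn : FreeGroup.of (p', (1 : A)) ≠ 1 := FreeGroup.of_ne_one _
  refine mem_rest_of_fixed (rotMul p'' _ hu1 l) (rotMul p'' _ hu1 l)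
    ((D.beta (R.pin p'') ^ l : MulAut _).toMonoidHom) ?_ ?_ (fun x => rotMul_ne hu1 hl hn x)
    (fun x => rotMul_ne hu1 hl hn x) _ ?_
  · intro r hr
    exact D.beta_zpow_rest _ _ (by rwa [hc])
  · intro x
    have := D.beta_zpow_of (R.pin p'') l x.1 (x.2.trans hc.symm)
    rw [hu, hv] at this
    exact this
  · have := hb (FreeGroup.of x)
    rw [D.beta_rest _ (of_mem_rest (by rwa [hc]))] at this
    exact this.symm

/-- The image of a letter involves only letters of its own class, and the twist pinning this class
then forces it to have length one. -/
theorem Compat.letter (x : P × A) :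
    ∃ (y : P × A) (b : Bool), η (FreeGroup.of x) = FreeGroup.mk [(y, b)] := by
  classical
  obtain ⟨p, h⟩ := x
  obtain ⟨p', hp', hu, hv⟩ := R.pin_ne p
  obtain ⟨l, hl, hb⟩ := hη.beta (R.pin p)
  have hc := R.cls_pin p
  have hu1 : FreeGroup.of (p', (1 : A)) ∈ RestOf A p := of_mem_rest hp'
  have hL : ∀ a ∈ (η (FreeGroup.of (p, h))).toWord, a.1.1 = p := by
    intro a ha
    by_contra hne
    have h1 := hη.letter_rest R η a.1.1 (p, h) (fun h => hne h.symm)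
    exact (mem_rest_iff _ _).1 h1 a ha rfl
  have hk : η (FreeGroup.of (p', h)) ∈ RestOf A p := hη.letter_rest R η p _ hp'
  have key := pin_rigid (rotMul p _ hu1 l) (rotMul p _ hu1 l) ⟨_, hk⟩
    ((D.beta (R.pin p) ^ l : MulAut _).toMonoidHom) (by
      intro r hr
      exact D.beta_zpow_rest _ _ (by rwa [hc])) (by
      intro x
      have := D.beta_zpow_of (R.pin p) l x.1 (x.2.trans hc.symm)
      rw [hu, hv] at this
      exact this) (by
      rintro ⟨⟨⟨a1, a2⟩, ha⟩, b⟩ ⟨⟨⟨c1, c2⟩, hc⟩, d⟩ hlm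
      simp only at ha hc
      subst ha
      subst hc
      have h' := congrArg Subtype.val hlm
      simp only [rgt, lft, rotMul] at h'
      cases b <;> cases d <;>
        simp only [rot_of, mul_one, if_true, if_false, Subgroup.coe_mul, Subgroup.coe_inv,
          OneMemClass.coe_one, Bool.false_eq_true] at h'
      · exact (of_zpow_mul_ne (a := (p', a2)) (b := (p', c2)) (neg_ne_zero.2 hl) (by
          rw [zpow_neg, zpow_neg]; exact h')).elim
      · have := (of_zpow_inj hl (inv_mul_eq_one.1 h')).1
        obtain rfl : a2 = c2 := congrArg Prod.snd this
        rfl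
      · have := (of_zpow_inj hl (mul_inv_eq_one.1 h')).1
        obtain rfl : a2 = c2 := congrArg Prod.snd this
        rfl
      · exact (of_zpow_mul_ne hl h').elim)
    (η (FreeGroup.of (p, h))).toWord hL ⟨_, hk⟩ (by
      rw [FreeGroup.mk_toWord]
      have := hb (FreeGroup.of (p, h))
      rw [D.beta_of _ _ hc.symm, hu, hv, rot_of, map_mul, map_mul, mul_one] at this
      exact this.symm)
  rw [FreeGroup.mk_toWord] at key
  rcases key with h1 | ⟨y, -, b, h1⟩
  · exact absurd ((map_eq_one_iff _ hη.inj).1 h1) (FreeGroup.of_ne_one _)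
  · exact ⟨y, b, h1⟩

omit R hη [Group A] in
theorem pow_letter (x y : P × A) (b : Bool) (h : η (FreeGroup.of x) = FreeGroup.mk [(y, b)])
    (c : Bool) : η (FreeGroup.mk [(x, c)]) = FreeGroup.mk [(y, b == c)] := by
  cases c
  · have : (FreeGroup.mk [(x, false)]) = (FreeGroup.of x)⁻¹ := rfl
    rw [this, map_inv, h]
    cases b <;> rfl
  · have : (FreeGroup.mk [(x, true)]) = FreeGroup.of x := rfl
    rw [this, h]
    cases b <;> rfl

/-- Signed letters are permuted, so a power is the identity. -/
theorem Compat.exists_pow [Finite P] [Finite A] :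
    ∃ n : ℕ, 0 < n ∧ ∀ w, (η^[n]) w = w := by
  classical
  choose y b hyb using hη.letter R η
  let f : (P × A) × Bool → (P × A) × Bool := fun a => (y a.1, b a.1 == a.2)
  have hf : ∀ a, η (FreeGroup.mk [a]) = FreeGroup.mk [f a] := fun a =>
    pow_letter η a.1 _ _ (hyb a.1) a.2
  have hmk : Function.Injective fun a : (P × A) × Bool => FreeGroup.mk [a] := by
    intro a c h
    have := congrArg FreeGroup.toWord h
    simpa [FreeGroup.toWord_mk] using this
  have hfi : Function.Injective f := by
    intro a c h
    apply hmk
    apply hη.inj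
    simp only [hf, h]
  let e : Equiv.Perm ((P × A) × Bool) := Equiv.ofBijective f (Finite.injective_iff_bijective.1 hfi)
  refine ⟨orderOf e, orderOf_pos e, ?_⟩
  have hit : ∀ n a, (η^[n]) (FreeGroup.mk [a]) = FreeGroup.mk [(e ^ n) a] := by
    intro n
    induction n with
    | zero => intro a; rfl
    | succ n ih =>
      intro a
      rw [Function.iterate_succ_apply', ih, hf, pow_succ']
      rfl
  have hpow : ∀ n : ℕ, ∃ θ : FreeGroup (P × A) →* FreeGroup (P × A), ∀ w, θ w = (η^[n]) w := by
    intro n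
    induction n with
    | zero => exact ⟨MonoidHom.id _, fun w => rfl⟩
    | succ n ih =>
      obtain ⟨θ, hθ⟩ := ih
      exact ⟨η.comp θ, fun w => by rw [Function.iterate_succ_apply', ← hθ]; rfl⟩
  obtain ⟨θ, hθ⟩ := hpow (orderOf e)
  have : θ = MonoidHom.id _ := by
    ext x
    have := hit (orderOf e) (x, true)
    rw [pow_orderOf_eq_one] at this
    exact (hθ _).trans this
  intro w
  rw [← hθ, this]; rfl

omit hη η in
/-- An endomorphism fixing the finite group and the free kernel is the identity. -/
theorem eq_id_of_fix (χ : D.GGroup →* D.GGroup)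
    (hfix : ∀ a, χ (D.ii a) = D.ii a) (hw : ∀ w, χ (inl w) = inl w) : χ = MonoidHom.id _ := by
  have h1 : ∀ y, χ (inr (inl (FreeGroup.of y))) = inr (inl (FreeGroup.of y)) := by
    intro y
    obtain ⟨l, hl⟩ := fix_letter χ hfix R y
    have hb := eta_beta χ (MonoidHom.id _) hw y l hl
    let x : P × A := (D.cls y.1, 1)
    have h2 := hb (FreeGroup.of x)
    simp only [MonoidHom.id_apply] at h2
    have h3 := D.beta_zpow_of y.1 l x rfl
    have h4 := D.beta_of y.1 x rfl
    rw [← h2, h4] at h3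
    simp only [x, map_one, MulAut.one_apply] at h3
    have h5 := trivial_of_fixed (P := fun x : P × A => x.1 = D.cls y.1) ⟨x, rfl⟩
      ⟨(D.u y.1) ^ (-1 + l), Subgroup.zpow_mem _ (D.hu _) _⟩
      ⟨(D.v y.1) ^ (l - 1), Subgroup.zpow_mem _ (D.hv _) _⟩ (by
        simp only [x]
        rw [zpow_add, zpow_sub_one, zpow_neg_one]
        calc _ = (D.u y.1)⁻¹ * (D.u y.1 ^ l * FreeGroup.of (D.cls y.1, 1) * D.v y.1 ^ l) *
            (D.v y.1)⁻¹ := by group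
          _ = _ := by rw [← h3]; group)
    have h6 := congrArg Subtype.val h5.1
    have h7 := congrArg Subtype.val h5.2
    have hl1 : l = 1 := by
      rcases R.nontriv y.1 with h | h
      · rcases zpow_eq_one_iff' _ _ h6 with h' | h'
        · exact absurd h' h
        · omega
      · rcases zpow_eq_one_iff' _ _ h7 with h' | h'
        · exact absurd h' h
        · omega
    rw [hl, hl1, zpow_one]
  refine SemidirectProduct.hom_ext ?_ ?_
  · ext w : 1
    exact hw _
  · refine SemidirectProduct.hom_ext ?_ ?_
    · ext y : 1
      exact h1 y
    · ext a : 1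
      exact hfix a

omit hη η in
/-- After reduction to an endomorphism fixing the finite group, some power of it is the identity. -/
theorem isCoHopfian [Finite P] [Finite A] [Finite J] : IsCoHopfian D.GGroup := by
  refine D.coHopfian_of_fix fun χ hi hfix => ?_
  obtain ⟨η, hη⟩ := fix_base χ hfix R
  have hc : Compat D η := by
    refine ⟨?_, eta_rot χ hfix η hη, fun j => ?_⟩
    · intro a b h
      apply inl_injective (φ := D.actE)
      apply hi
      rw [hη, hη, h]
    · obtain ⟨l, hl⟩ := fix_letter χ hfix R (j, 0)
      refine ⟨l, ?_, eta_beta χ η hη _ l hl⟩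
      rintro rfl
      rw [zpow_zero, map_one, map_one] at hl
      have h1 := hi (hl.trans (map_one χ).symm)
      have h2 := inl_injective (inr_injective (h1.trans (map_one inr).symm) |>.trans
        (map_one inl).symm)
      exact FreeGroup.of_ne_one _ h2
  obtain ⟨n, hn, hpow⟩ := hc.exists_pow R η
  have hit : ∀ m : ℕ, ∃ θ : D.GGroup →* D.GGroup, (∀ z, θ z = (χ^[m]) z) ∧
      (∀ a, θ (D.ii a) = D.ii a) ∧ (∀ w, θ (inl w) = inl ((η^[m]) w)) := by
    intro m
    induction m with
    | zero => exact ⟨MonoidHom.id _, fun _ => rfl, fun _ => rfl, fun _ => rfl⟩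
    | succ m ih =>
      obtain ⟨θ, h1, h2, h3⟩ := ih
      refine ⟨χ.comp θ, fun z => ?_, fun a => ?_, fun w => ?_⟩
      · rw [Function.iterate_succ_apply', ← h1]; rfl
      · rw [MonoidHom.comp_apply, h2, hfix]
      · rw [MonoidHom.comp_apply, h3, hη, Function.iterate_succ_apply']
  obtain ⟨θ, h1, h2, h3⟩ := hit n
  have hid := eq_id_of_fix R θ h2 (fun w => by rw [h3, hpow])
  obtain ⟨k, rfl⟩ : ∃ k, n = k + 1 := ⟨n - 1, by omega⟩
  intro z
  refine ⟨(χ^[k]) z, ?_⟩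
  have h4 := Function.iterate_succ_apply' χ k z
  exact h4.symm.trans ((h1 z).symm.trans (by rw [hid]; rfl))

end TwistData

/-! ### The auxiliary group and its finite quotients -/

section dead

/-- A Higman quadruple in a finite group is trivial: the smallest prime `p` dividing the order of
one of its members would give, through the order of `2` modulo `p`, a smaller one. -/
theorem higman_dead {F : Type*} [Group F] [Finite F] (u : Fin 4 → F)
    (h : ∀ i, (u (i + 1))⁻¹ * u i * u (i + 1) = u i ^ 2) : ∀ i, u i = 1 := by
  classical
  by_contra hne
  push Not at hne
  obtain ⟨i0, hi0⟩ := hne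
  have hex : ∃ p : ℕ, p.Prime ∧ ∃ i, p ∣ orderOf (u i) :=
    ⟨_, Nat.minFac_prime (fun h => hi0 (orderOf_eq_one_iff.1 h)), i0, Nat.minFac_dvd _⟩
  obtain ⟨hp, i, hi⟩ := Nat.find_spec hex
  have hmin := fun q => Nat.find_min hex (m := q)
  set p := Nat.find hex
  have hconj : ∀ n : ℕ, (u (i + 1) ^ n)⁻¹ * u i * u (i + 1) ^ n = u i ^ 2 ^ n := by
    intro n
    induction n with
    | zero => simp
    | succ n ih =>
      rw [pow_succ' (u (i + 1)), mul_inv_rev]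
      calc _ = (u (i + 1) ^ n)⁻¹ * ((u (i + 1))⁻¹ * u i * u (i + 1)) * u (i + 1) ^ n := by group
        _ = ((u (i + 1) ^ n)⁻¹ * u i * u (i + 1) ^ n) ^ 2 := by rw [h]; simp only [pow_two]; group
        _ = _ := by rw [ih, ← pow_mul, pow_succ]
  have h1 := hconj (orderOf (u (i + 1)))
  rw [pow_orderOf_eq_one, inv_one, one_mul, mul_one] at h1
  set n := orderOf (u (i + 1)) with hn
  have h2 : orderOf (u i) ∣ 2 ^ n - 1 := by
    rw [orderOf_dvd_iff_pow_eq_one]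
    have h3 : u i ^ (2 ^ n - 1) * u i = 1 * u i := by
      rw [← pow_succ, Nat.sub_add_cancel Nat.one_le_two_pow, ← h1, one_mul]
    exact mul_right_cancel h3
  have : Fact p.Prime := ⟨hp⟩
  have h4 : ((2 : ZMod p)) ^ n = 1 := by
    have h5 : ((2 ^ n - 1 : ℕ) : ZMod p) = 0 := (ZMod.natCast_eq_zero_iff _ _).2 (hi.trans h2)
    rw [Nat.cast_sub Nat.one_le_two_pow] at h5
    push_cast at h5
    exact sub_eq_zero.1 h5
  have hn0 : n ≠ 0 := (orderOf_pos _).ne'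
  have h20 : (2 : ZMod p) ≠ 0 := by
    intro h0
    rw [h0, zero_pow hn0] at h4
    exact zero_ne_one h4
  have h21 : (2 : ZMod p) ≠ 1 := by
    intro h0
    have : (1 : ZMod p) = 0 := by linear_combination h0
    exact one_ne_zero this
  obtain ⟨q, hq, hqd⟩ : ∃ q : ℕ, q.Prime ∧ q ∣ orderOf (2 : ZMod p) :=
    ⟨_, Nat.minFac_prime (fun h => h21 (orderOf_eq_one_iff.1 h)), Nat.minFac_dvd _⟩
  have hqp : q ∣ p - 1 := hqd.trans (ZMod.orderOf_dvd_card_sub_one h20)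
  have hlt : q < p := by
    have := Nat.le_of_dvd (by have := hp.two_le; omega) hqp
    have := hp.two_le
    omega
  exact hmin q hlt ⟨hq, i + 1, hqd.trans (orderOf_dvd_of_pow_eq_one h4)⟩

/-- The generators of the auxiliary group: two Higman quadruples `a`, `b`, an element `c` on which
`a 0`, `b 0` act as squaring and cubing, and a redundant trivial generator `s`. -/
inductive QGen
  | a (i : Fin 4) | b (i : Fin 4) | c | s

/-- Indices of the defining relators of the auxiliary group. -/
inductive QRel
  | ha (i : Fin 4) | hb (i : Fin 4) | ac | bc | comm (i : Fin 4) | s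

instance : Finite QGen :=
  Finite.of_injective (β := Fin 4 ⊕ Fin 4 ⊕ Bool)
    (fun
      | .a i => .inl i
      | .b i => .inr (.inl i)
      | .c => .inr (.inr true)
      | .s => .inr (.inr false))
    (by rintro (i | i | _ | _) (j | j | _ | _) h <;> simp_all)

instance : Finite QRel :=
  Finite.of_injective (β := (Fin 4 ⊕ Fin 4 ⊕ Fin 4) ⊕ Fin 3)
    (fun
      | .ha i => .inl (.inl i)
      | .hb i => .inl (.inr (.inl i))
      | .comm i => .inl (.inr (.inr i))
      | .ac => .inr 0
      | .bc => .inr 1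
      | .s => .inr 2)
    (by rintro (i | i | _ | _ | i | _) (j | j | _ | _ | j | _) h <;> simp_all)

/-- The value of a relator at a tuple of elements. -/
def relVal {Γ : Type*} [Group Γ] (u : QGen → Γ) : QRel → Γ
  | .ha i => (u (.a (i + 1)))⁻¹ * u (.a i) * u (.a (i + 1)) * (u (.a i) ^ 2)⁻¹
  | .hb i => (u (.b (i + 1)))⁻¹ * u (.b i) * u (.b (i + 1)) * (u (.b i) ^ 2)⁻¹
  | .ac => (u (.a 0))⁻¹ * u .c * u (.a 0) * (u .c ^ 2)⁻¹
  | .bc => (u (.b 0))⁻¹ * u .c * u (.b 0) * (u .c ^ 3)⁻¹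
  | .comm i => u (.b 0) * u (.a i) * (u (.b 0))⁻¹ * (u (.a i))⁻¹
  | .s => u .s

theorem map_relVal {Γ Δ : Type*} [Group Γ] [Group Δ] (f : Γ →* Δ) (u : QGen → Γ) (r : QRel) :
    f (relVal u r) = relVal (fun i => f (u i)) r := by
  cases r <;> simp [relVal]

/-- The relation by which `a` conjugates `c` to its square kills `c` once `a` is trivial. -/
theorem sq_dead {F : Type*} [Group F] {a c : F} (ha : a = 1) (h : a⁻¹ * c * a * (c ^ 2)⁻¹ = 1) :
    c = 1 := by
  subst ha
  rw [inv_one, one_mul, mul_one, mul_inv_eq_one, pow_two] at h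
  exact (mul_eq_left.1 h.symm)

/-- The auxiliary group has no nontrivial finite quotients. -/
theorem gen_dead {F : Type*} [Group F] [Finite F] (u : QGen → F) (h : ∀ r, relVal u r = 1) :
    ∀ i, u i = 1 := by
  have ha := higman_dead (fun i => u (.a i)) fun i => mul_inv_eq_one.1 (h (.ha i))
  have hb := higman_dead (fun i => u (.b i)) fun i => mul_inv_eq_one.1 (h (.hb i))
  rintro (i | i | _ | _)
  · exact ha i
  · exact hb i
  · exact sq_dead (ha 0) (h .ac)
  · exact h .s

theorem central_sq {Γ : Type*} [Group Γ] {x y α β : Γ} (hα : ∀ g, Commute α g)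
    (hβ : ∀ g, Commute β g) (hv : α = y⁻¹ * x * y * (x ^ 2)⁻¹) :
    (y * β)⁻¹ * (x * α) * (y * β) = (x * α) ^ 2 := by
  have h1 : (y * β)⁻¹ * (x * α) * (y * β) = y⁻¹ * x * y * α := by
    calc _ = β⁻¹ * (y⁻¹ * x * (α * y)) * β := by group
      _ = β⁻¹ * (β * (y⁻¹ * x * (α * y))) := by rw [mul_assoc, ← (hβ _).eq]
      _ = _ := by rw [(hα y).eq]; group
  have h2 : y⁻¹ * x * y = α * x ^ 2 := by rw [hv]; group
  rw [h1, h2, ((hα x).symm).mul_pow, (hα (x ^ 2)).eq, mul_assoc, ← pow_two]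

/-- Central extensions split over the relators: a tuple satisfying them up to central elements can
be corrected by central elements. The corrections are the values of the relators involving squares
and of `s`. The commutators and the relator cubing `c` then hold as well: conjugation multiplies by
central elements compatibly with squaring, and a central element equal to its square is trivial. -/
theorem central_split {Γ : Type*} [Group Γ] (Z : Subgroup Γ) (hZ : ∀ z ∈ Z, ∀ g, Commute z g)
    (u : QGen → Γ) (h : ∀ r, relVal u r ∈ Z) :
    ∃ z : QGen → Γ, (∀ i, z i ∈ Z) ∧ ∀ r, relVal (fun i => u i * z i) r = 1 := by
  let z : QGen → Γ
    | .a i => relVal u (.ha i)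
    | .b i => relVal u (.hb i)
    | .c => relVal u .ac
    | .s => (relVal u .s)⁻¹
  have hz : ∀ i, z i ∈ Z := by
    rintro (i | i | _ | _)
    exacts [h _, h _, h _, Z.inv_mem (h _)]
  have hc := fun i => hZ _ (hz i)
  have ha : ∀ i, (u (.a (i + 1)) * z (.a (i + 1)))⁻¹ * (u (.a i) * z (.a i)) *
      (u (.a (i + 1)) * z (.a (i + 1))) = (u (.a i) * z (.a i)) ^ 2 :=
    fun i => central_sq (hc (.a i)) (hc (.a (i + 1))) rfl
  have hb : ∀ i, (u (.b (i + 1)) * z (.b (i + 1)))⁻¹ * (u (.b i) * z (.b i)) *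
      (u (.b (i + 1)) * z (.b (i + 1))) = (u (.b i) * z (.b i)) ^ 2 :=
    fun i => central_sq (hc (.b i)) (hc (.b (i + 1))) rfl
  have hac : (u (.a 0) * z (.a 0))⁻¹ * (u .c * z .c) * (u (.a 0) * z (.a 0)) =
      (u .c * z .c) ^ 2 := central_sq (hc .c) (hc (.a 0)) rfl
  have hmem : ∀ r, relVal (fun i => u i * z i) r ∈ Z := by
    let q : Γ → Γ → Prop := fun x y => x * y⁻¹ ∈ Z
    have hZn : Z.Normal := ⟨fun n hn g => by
      rw [((hZ n hn g).symm).eq, mul_inv_cancel_right]; exact hn⟩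
    intro r
    have h1 : (QuotientGroup.mk' Z) (relVal u r) = 1 := (QuotientGroup.eq_one_iff _).2 (h r)
    rw [← QuotientGroup.eq_one_iff]
    change (QuotientGroup.mk' Z) _ = 1
    rw [map_relVal] at h1 ⊢
    rw [← h1]
    congr 1
    funext i
    rw [map_mul]
    have : (QuotientGroup.mk' Z) (z i) = 1 := (QuotientGroup.eq_one_iff _).2 (hz i)
    rw [this, mul_one]
  refine ⟨z, hz, ?_⟩
  generalize hw : (fun i => u i * z i) = w at hmem
  have hw' : ∀ i, u i * z i = w i := fun i => congrFun hw i
  simp only [hw'] at ha hb hac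
  -- Conjugation by `b 0` multiplies each `a i` by a central `ζ`; the squaring relation gives
  -- `ζ = ζ ^ 2`.
  have hcomm : ∀ i, w (.b 0) * w (.a i) * (w (.b 0))⁻¹ * (w (.a i))⁻¹ = 1 := by
    intro i
    have e : ∀ j, ∃ ζ ∈ Z, MulAut.conj (w (.b 0)) (w (.a j)) = ζ * w (.a j) := fun j =>
      ⟨_, hmem (.comm j), by simp [relVal]⟩
    obtain ⟨ζ, hζ, h1⟩ := e i
    obtain ⟨ξ, hξ, h2⟩ := e (i + 1)
    have h3 := congrArg (MulAut.conj (w (.b 0))) (ha i)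
    rw [map_mul, map_mul, map_inv, map_pow, h1, h2] at h3
    have h4 : (ξ * w (.a (i + 1)))⁻¹ * (ζ * w (.a i)) * (ξ * w (.a (i + 1))) =
        ζ * w (.a i) ^ 2 := by
      calc _ = (w (.a (i + 1)))⁻¹ * (ξ⁻¹ * ((ζ * w (.a i)) * ξ)) * w (.a (i + 1)) := by group
        _ = (w (.a (i + 1)))⁻¹ * ζ * w (.a i) * w (.a (i + 1)) := by
          rw [← (hZ ξ hξ _).eq]; group
        _ = _ := by
          rw [← (hZ ζ hζ _).eq, mul_assoc ζ, mul_assoc ζ, ha]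
    rw [h4, (hZ ζ hζ _).mul_pow] at h3
    have h5 := mul_right_cancel h3
    have h6 : ζ = 1 := by
      rw [pow_two] at h5
      exact mul_eq_left.1 h5.symm
    rw [h6, one_mul, MulAut.conj_apply] at h1
    rw [h1, mul_inv_cancel]
  -- Conjugation by `(b 0)⁻¹` maps `c` to `ζ * c ^ 3` with `ζ` central. It commutes with conjugation
  -- by `(a 0)⁻¹`, which squares `c`; comparing the two orders gives `ζ = ζ ^ 2`.
  have hbc : (w (.b 0))⁻¹ * w .c * w (.b 0) = w .c ^ 3 := by
    obtain ⟨ζ, hζ, h1⟩ : ∃ ζ ∈ Z, MulAut.conj (w (.b 0))⁻¹ (w .c) = ζ * w .c ^ 3 :=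
      ⟨_, hmem .bc, by simp [relVal]⟩
    have hcm : Commute (w (.a 0))⁻¹ (w (.b 0))⁻¹ := by
      have := hcomm 0
      rw [mul_inv_eq_one, mul_inv_eq_iff_eq_mul] at this
      exact (Commute.inv_inv (show Commute (w (.b 0)) (w (.a 0)) from this)).symm
    have hac' : MulAut.conj (w (.a 0))⁻¹ (w .c) = w .c ^ 2 := by
      rw [MulAut.conj_apply, inv_inv]; exact hac
    have h2 := congrArg (MulAut.conj (w (.a 0))⁻¹) h1
    rw [← MulAut.mul_apply, ← map_mul, hcm.eq, map_mul, MulAut.mul_apply, hac', map_pow, h1,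
      map_mul, map_pow, hac', (hZ ζ hζ _).mul_pow] at h2
    have h3 : MulAut.conj (w (.a 0))⁻¹ ζ = ζ := by
      rw [MulAut.conj_apply, ← (hZ ζ hζ _).eq, mul_inv_cancel_right]
    rw [h3, ← pow_mul, ← pow_mul] at h2
    have h5 := mul_right_cancel h2
    have h6 : ζ = 1 := by
      rw [pow_two] at h5
      exact mul_eq_left.1 h5
    rw [h6, one_mul, MulAut.conj_apply, inv_inv] at h1
    exact h1
  rintro (i | i | _ | _ | i | _)
  · exact mul_inv_eq_one.2 (ha i)
  · exact mul_inv_eq_one.2 (hb i)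
  · exact mul_inv_eq_one.2 hac
  · exact mul_inv_eq_one.2 hbc
  · exact hcomm i
  · change w .s = 1
    rw [← hw' .s]
    exact mul_inv_cancel _

end dead

/-! ### An amalgam of two affine groups -/

section higman
open Monoid

/-- Every element of a free group of rank one is a power of the generator. -/
theorem freeGroup_unit_eq (g : FreeGroup Unit) : ∃ n : ℤ, g = FreeGroup.of () ^ n := by
  induction g using FreeGroup.induction_on with
  | C1 => exact ⟨0, rfl⟩
  | of x => exact ⟨1, (zpow_one _).symm⟩
  | inv_of x _ => exact ⟨-1, (zpow_neg_one _).symm⟩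
  | mul x y hx hy =>
    obtain ⟨n, rfl⟩ := hx
    obtain ⟨m, rfl⟩ := hy
    exact ⟨n + m, (zpow_add _ _ _).symm⟩

/-- Translation of the rational line by one. -/
def transl : Equiv.Perm ℚ := Equiv.addRight 1

/-- Halving on the rational line. -/
def halve : Equiv.Perm ℚ := Equiv.divRight₀ 2 two_ne_zero

theorem transl_zpow (n : ℤ) (x : ℚ) : (transl ^ n) x = x + n := by
  induction n using Int.induction_on generalizing x with
  | zero => simp
  | succ n ih =>
    rw [zpow_add_one, Equiv.Perm.mul_apply, ih]
    simp [transl]; ring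
  | pred n ih =>
    rw [zpow_sub_one, Equiv.Perm.mul_apply, ih]
    have : (transl⁻¹ : Equiv.Perm ℚ) x = x - 1 := by
      rw [Equiv.Perm.inv_eq_iff_eq]; simp [transl]
    rw [this]; push_cast; ring

theorem halve_zpow (n : ℤ) (x : ℚ) : (halve ^ n) x = x * 2⁻¹ ^ n := by
  induction n using Int.induction_on generalizing x with
  | zero => simp
  | succ n ih =>
    rw [zpow_add_one, Equiv.Perm.mul_apply, ih, zpow_add_one₀ (by norm_num)]
    simp [halve, div_eq_mul_inv]; ring
  | pred n ih =>
    rw [zpow_sub_one, Equiv.Perm.mul_apply, ih, zpow_sub_one₀ (by norm_num)]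
    have : (halve⁻¹ : Equiv.Perm ℚ) x = x * 2 := by
      rw [Equiv.Perm.inv_eq_iff_eq]; simp [halve]
    rw [this]; ring

theorem halve_transl : halve⁻¹ * transl * halve = transl ^ 2 := by
  rw [mul_assoc, inv_mul_eq_iff_eq_mul]
  ext x
  have := transl_zpow 2 x
  norm_cast at this
  simp only [Equiv.Perm.mul_apply, this]
  simp [halve, transl]
  ring

theorem transl_eq_halve {n k : ℤ} (h : transl ^ n = halve ^ k) : n = 0 ∧ k = 0 := by
  have h0 := congrArg (fun σ : Equiv.Perm ℚ => σ 0) h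
  have h1 := congrArg (fun σ : Equiv.Perm ℚ => σ 1) h
  simp only [transl_zpow, halve_zpow, zero_mul, zero_add] at h0 h1
  have hn : n = 0 := by exact_mod_cast h0
  refine ⟨hn, ?_⟩
  rw [hn] at h1
  have h2 : (2⁻¹ : ℚ) ^ k = 1 := by simpa using h1.symm
  rw [inv_zpow, inv_eq_one] at h2
  exact (zpow_eq_one_iff_right₀ (by norm_num) (by norm_num)).1 h2

/-- The two ways of gluing the base group: along dilations, or along translations. -/
def bsBase : Bool → Equiv.Perm ℚ
  | true => halve
  | false => transl

/-- The complementary cyclic subgroups of the two factors. -/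
def bsFree : Bool → Equiv.Perm ℚ
  | true => transl
  | false => halve

theorem bsFree_eq_bsBase (i : Bool) {n k : ℤ} (h : bsFree i ^ n = bsBase i ^ k) :
    n = 0 ∧ k = 0 := by
  cases i
  · exact (transl_eq_halve (show transl ^ k = halve ^ n from h.symm)).symm
  · exact transl_eq_halve h

/-- The constant family of factors of the amalgam. -/
abbrev BSFactor : Bool → Type := fun _ => Equiv.Perm ℚ

/-- The embeddings of the infinite cyclic base group in the two factors. -/
def bsHom (i : Bool) : Multiplicative ℤ →* BSFactor i := zpowersHom _ (bsBase i)

theorem bsHom_apply (i : Bool) (k : Multiplicative ℤ) : bsHom i k = bsBase i ^ k.toAdd := rfl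

theorem bsHom_injective (i : Bool) : Function.Injective (bsHom i) := by
  rw [injective_iff_map_eq_one]
  intro k hk
  rw [bsHom_apply] at hk
  have := (bsFree_eq_bsBase i (n := 0) (k := k.toAdd) (by rw [zpow_zero, hk])).2
  exact this

/-- Two affine groups of the rational line, amalgamated along the dilations of one and the
translations of the other. -/
abbrev BSAmalgam := PushoutI bsHom

/-- The free group of rank two inside the amalgam. -/
def bsFreeHom : CoprodI (fun _ : Bool => FreeGroup Unit) →* BSAmalgam :=
  (PushoutI.ofCoprodI (φ := bsHom)).comp
    (CoprodI.lift fun i => (CoprodI.of (M := BSFactor) (i := i)).comp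
      (FreeGroup.lift fun _ => bsFree i))

theorem bsFree_mem_range (i : Bool) (g : FreeGroup Unit)
    (h : (FreeGroup.lift fun _ => bsFree i) g ∈ (bsHom i).range) : g = 1 := by
  obtain ⟨n, rfl⟩ := freeGroup_unit_eq g
  obtain ⟨k, hk⟩ := h
  rw [bsHom_apply, map_zpow, FreeGroup.lift_apply_of] at hk
  rw [(bsFree_eq_bsBase i hk.symm).1, zpow_zero]

theorem bsFreeHom_injective : Function.Injective bsFreeHom := by
  classical
  rw [injective_iff_map_eq_one]
  intro x hx
  obtain ⟨w, rfl⟩ : ∃ w : CoprodI.Word (fun _ : Bool => FreeGroup Unit), w.prod = x :=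
    ⟨CoprodI.Word.equiv x, CoprodI.Word.equiv.symm_apply_apply x⟩
  let F : (Σ _ : Bool, FreeGroup Unit) → (Σ i : Bool, BSFactor i) :=
    fun a => ⟨a.1, (FreeGroup.lift fun _ => bsFree a.1) a.2⟩
  have hmem : ∀ a ∈ w.toList.map F, a.2 ∉ (bsHom a.1).range := by
    intro a ha
    obtain ⟨b, hb, rfl⟩ := List.mem_map.1 ha
    intro h
    exact w.ne_one b hb (bsFree_mem_range b.1 b.2 h)
  let w' : CoprodI.Word BSFactor :=
    ⟨w.toList.map F, fun a ha h => hmem a ha (by rw [h]; exact one_mem _), by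
      rw [List.isChain_map]
      exact w.chain_ne⟩
  have hprod : (CoprodI.lift fun i => (CoprodI.of (M := BSFactor) (i := i)).comp
      (FreeGroup.lift fun _ => bsFree i)) w.prod = w'.prod := by
    simp only [CoprodI.Word.prod, w', map_list_prod, List.map_map]
    congr 1
  have hred : PushoutI.Reduced bsHom w' := fun a ha => hmem a ha
  have hx' : PushoutI.ofCoprodI (φ := bsHom) w'.prod = 1 := by
    rw [← hprod]; exact hx
  have hempty := hred.eq_empty_of_mem_range bsHom_injective (by rw [hx']; exact one_mem _)
  have hl : w'.toList = [] := by rw [hempty]; rfl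
  have hl' : w.toList = [] := List.map_eq_nil_iff.1 hl
  simp [CoprodI.Word.prod, hl']

/-- There is a group with elements satisfying two consecutive Higman relations such that the outer
two elements freely generate a free group. -/
theorem exists_bs : ∃ (K : Type) (_ : Group K) (θ : FreeGroup Bool →* K) (b : K),
    Function.Injective θ ∧
    b⁻¹ * θ (FreeGroup.of true) * b = θ (FreeGroup.of true) ^ 2 ∧
    (θ (FreeGroup.of false))⁻¹ * b * θ (FreeGroup.of false) = b ^ 2 := by
  have h1 : ∀ i, bsFreeHom (freeGroupEquivCoprodI (FreeGroup.of i)) =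
      PushoutI.of (φ := bsHom) i (bsFree i) := by
    intro i
    simp [bsFreeHom]
  have hb : ∀ i, PushoutI.of (φ := bsHom) i (bsBase i) =
      PushoutI.base bsHom (Multiplicative.ofAdd 1) := by
    intro i
    rw [← PushoutI.of_apply_eq_base bsHom i, bsHom_apply, toAdd_ofAdd, zpow_one]
  have h1' : ∀ i, (bsFreeHom.comp freeGroupEquivCoprodI.toMonoidHom) (FreeGroup.of i) =
      PushoutI.of (φ := bsHom) i (bsFree i) := h1
  refine ⟨BSAmalgam, inferInstance, bsFreeHom.comp freeGroupEquivCoprodI.toMonoidHom,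
    PushoutI.base bsHom (Multiplicative.ofAdd 1),
    bsFreeHom_injective.comp freeGroupEquivCoprodI.injective, ?_, ?_⟩
  · rw [h1', ← hb true, ← map_inv, ← map_mul, ← map_mul, ← map_pow]
    exact congrArg _ halve_transl
  · rw [h1', ← hb false, ← map_inv, ← map_mul, ← map_mul, ← map_pow]
    exact congrArg _ halve_transl

end higman

/-! ### Infinite Higman quadruples -/

section glue
open Cardinal

/-- A set with a free action is a product of the group with the set of orbits. -/
theorem free_equiv {C Z : Type} [Group C] [Nonempty Z] (ρ : C →* Equiv.Perm Z)
    (hρ : ∀ c z, ρ c z = z → c = 1) :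
    ∃ (O : Type) (g : C × O ≃ Z), Nonempty O ∧ #O ≤ #Z ∧
      ∀ c c' o, g (c' * c, o) = ρ c' (g (c, o)) := by
  let S : Setoid Z :=
    { r := fun z w => ∃ c, ρ c z = w
      iseqv :=
        { refl := fun z => ⟨1, by simp⟩
          symm := by
            rintro z w ⟨c, rfl⟩
            exact ⟨c⁻¹, by rw [← Equiv.Perm.mul_apply, ← map_mul]; simp⟩
          trans := by
            rintro z w x ⟨c, rfl⟩ ⟨d, rfl⟩
            exact ⟨d * c, by rw [map_mul, Equiv.Perm.mul_apply]⟩ } }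
  have hbij : Function.Bijective fun p : C × Quotient S => ρ p.1 p.2.out := by
    constructor
    · rintro ⟨c, o⟩ ⟨d, o'⟩ h
      simp only at h
      have ho : o = o' := by
        rw [← Quotient.out_eq o, ← Quotient.out_eq o']
        refine Quotient.sound ⟨d⁻¹ * c, ?_⟩
        rw [map_mul, Equiv.Perm.mul_apply, h, ← Equiv.Perm.mul_apply, ← map_mul]
        simp
      subst ho
      have : d⁻¹ * c = 1 := by
        refine hρ _ o.out ?_
        rw [map_mul, Equiv.Perm.mul_apply, h, ← Equiv.Perm.mul_apply, ← map_mul]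
        simp
      rw [inv_mul_eq_one.1 this]
    · intro z
      obtain ⟨c, hc⟩ := Quotient.exact (Quotient.out_eq (Quotient.mk S z))
      exact ⟨(c, Quotient.mk S z), hc⟩
  refine ⟨Quotient S, Equiv.ofBijective _ hbij,
    ⟨Quotient.mk S (Classical.arbitrary Z)⟩, mk_quotient_le, ?_⟩
  intro c c' o
  simp [Equiv.ofBijective]

/-- Two free actions of a group become isomorphic after multiplying both sets by a large enough
set with trivial action. -/
theorem glue {C Z₁ Z₂ : Type} [Group C] [Nonempty Z₁] [Nonempty Z₂]
    (ρ₁ : C →* Equiv.Perm Z₁) (ρ₂ : C →* Equiv.Perm Z₂)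
    (h₁ : ∀ c z, ρ₁ c z = z → c = 1) (h₂ : ∀ c z, ρ₂ c z = z → c = 1)
    (κ : Type) [Infinite κ] (hc₁ : #Z₁ ≤ #κ) (hc₂ : #Z₂ ≤ #κ) :
    ∃ e : Z₁ × κ ≃ Z₂ × κ, ∀ c z k,
      e (ρ₁ c z, k) = (ρ₂ c (e (z, k)).1, (e (z, k)).2) := by
  obtain ⟨O₁, g₁, hn₁, ho₁, hg₁⟩ := free_equiv ρ₁ h₁
  obtain ⟨O₂, g₂, hn₂, ho₂, hg₂⟩ := free_equiv ρ₂ h₂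
  have hinf := aleph0_le_mk κ
  have e₁ : #(O₁ × κ) = #κ := by
    rw [← mul_def]
    exact mul_eq_right hinf (ho₁.trans hc₁) (mk_ne_zero _)
  have e₂ : #(O₂ × κ) = #κ := by
    rw [← mul_def]
    exact mul_eq_right hinf (ho₂.trans hc₂) (mk_ne_zero _)
  obtain ⟨σ⟩ := Cardinal.eq.1 (e₁.trans e₂.symm)
  refine ⟨(Equiv.prodCongr g₁.symm (Equiv.refl κ)).trans <| (Equiv.prodAssoc C O₁ κ).trans <|
    (Equiv.prodCongr (Equiv.refl C) σ).trans <| (Equiv.prodAssoc C O₂ κ).symm.trans <|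
    (Equiv.prodCongr g₂ (Equiv.refl κ)), ?_⟩
  intro c z k
  obtain ⟨⟨d, o⟩, rfl⟩ := g₁.surjective z
  rw [← hg₁]
  simp [hg₂]

/-- The action of the permutations of the first factor on a product. -/
def prodPerm (Z κ : Type) : Equiv.Perm Z →* Equiv.Perm (Z × κ) where
  toFun σ := Equiv.prodCongr σ (Equiv.refl κ)
  map_one' := rfl
  map_mul' _ _ := rfl

theorem prodPerm_apply {Z κ : Type} (σ : Equiv.Perm Z) (z : Z) (k : κ) :
    prodPerm Z κ σ (z, k) = (σ z, k) := rfl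

/-- There is a Higman quadruple of permutations the first of which acts freely. In the regular action
of the group of `exists_bs`, with elements `a`, `b`, `c`, a permutation `F` intertwines the free
action of `⟨a, c⟩` with the one where `a` and `c` are exchanged; the quadruple is
`a, b, c, F⁻¹ b F`. -/
theorem exists_higman : ∃ (Ω : Type) (_ : Nonempty Ω) (α : Fin 4 → Equiv.Perm Ω),
    (∀ i, (α (i + 1))⁻¹ * α i * α (i + 1) = α i ^ 2) ∧
    ∀ (n : ℤ) x, (α 0 ^ n) x = x → n = 0 := by
  obtain ⟨K, _, θ, b, hθ, hab, hbc⟩ := exists_bs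
  let L : K →* Equiv.Perm (K × (K × ℕ)) := (prodPerm K (K × ℕ)).comp (MulAction.toPermHom K K)
  have hL : ∀ g x k, L g (x, k) = (g * x, k) := fun g x k => rfl
  have hnot : Function.Injective (FreeGroup.map not) :=
    FreeGroup.map_injective Bool.not_injective
  have hfree : ∀ ψ : FreeGroup Bool →* K, Function.Injective ψ → ∀ c z,
      (MulAction.toPermHom K K).comp ψ c z = z → c = 1 := by
    intro ψ hψ c z h
    have h' : ψ c * z = z := h
    exact hψ ((mul_eq_right.1 h').trans (map_one ψ).symm)
  have hcard : Cardinal.mk K ≤ Cardinal.mk (K × ℕ) :=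
    Cardinal.mk_le_of_injective (f := fun x => (x, 0)) fun x y h => (Prod.ext_iff.1 h).1
  obtain ⟨f, hf⟩ := glue ((MulAction.toPermHom K K).comp θ)
    ((MulAction.toPermHom K K).comp (θ.comp (FreeGroup.map not)))
    (hfree θ hθ) (hfree _ (hθ.comp hnot)) (K × ℕ) hcard hcard
  let F : Equiv.Perm (K × (K × ℕ)) := f
  have hF : ∀ c, F * L (θ c) = L (θ (FreeGroup.map not c)) * F := by
    intro c
    ext1 ⟨x, k⟩
    exact hf c x k
  have hF1 : L (θ (.of true)) = F⁻¹ * L (θ (.of false)) * F := by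
    rw [mul_assoc, eq_inv_mul_iff_mul_eq, hF]; rfl
  have hF2 : L (θ (.of false)) = F⁻¹ * L (θ (.of true)) * F := by
    rw [mul_assoc, eq_inv_mul_iff_mul_eq, hF]; rfl
  have hab' := congrArg L hab
  have hbc' := congrArg L hbc
  simp only [map_mul, map_inv, map_pow] at hab' hbc'
  refine ⟨K × (K × ℕ), inferInstance,
    ![L (θ (.of true)), L b, L (θ (.of false)), F⁻¹ * L b * F], ?_, ?_⟩
  · intro i
    fin_cases i
    · exact hab'
    · exact hbc'
    · change (F⁻¹ * L b * F)⁻¹ * L (θ (.of false)) * (F⁻¹ * L b * F) = L (θ (.of false)) ^ 2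
      rw [hF2]
      calc _ = F⁻¹ * ((L b)⁻¹ * L (θ (.of true)) * L b) * F := by group
        _ = _ := by rw [hab']; simp only [pow_two]; group
    · change (L (θ (.of true)))⁻¹ * (F⁻¹ * L b * F) * L (θ (.of true)) = (F⁻¹ * L b * F) ^ 2
      rw [hF1]
      calc _ = F⁻¹ * ((L (θ (.of false)))⁻¹ * L b * L (θ (.of false))) * F := by group
        _ = _ := by rw [hbc']; simp only [pow_two]; group
  · rintro n ⟨x, k⟩ h
    change (L (θ (.of true)) ^ n) (x, k) = (x, k) at h
    rw [← map_zpow, ← map_zpow, hL] at h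
    have h1 := hfree θ hθ (.of true ^ n) x (Prod.ext_iff.1 h).1
    exact (zpow_eq_one_iff' _ n h1).resolve_left (FreeGroup.of_ne_one _)

end glue

/-! ### An action detecting the element c -/

section strict
open Equiv

/-- A freely acting permutation of a countable set becomes the first member of a Higman quadruple
after taking the product with a large enough set. -/
theorem higman_on {Ω : Type} [Nonempty Ω] (α : Fin 4 → Perm Ω)
    (hα : ∀ i, (α (i + 1))⁻¹ * α i * α (i + 1) = α i ^ 2)
    (hfree : ∀ (n : ℤ) x, (α 0 ^ n) x = x → n = 0)
    {Z : Type} [Nonempty Z] [Countable Z] (τ : Perm Z) (hτ : ∀ (n : ℤ) x, (τ ^ n) x = x → n = 0) :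
    ∃ β : Fin 4 → Perm (Z × (Ω × ℕ)), (∀ i, (β (i + 1))⁻¹ * β i * β (i + 1) = β i ^ 2) ∧
      ∀ z k, β 0 (z, k) = (τ z, k) := by
  have hc1 : Cardinal.mk Z ≤ Cardinal.mk (Ω × ℕ) :=
    (Cardinal.mk_le_aleph0).trans (Cardinal.aleph0_le_mk _)
  have hc2 : Cardinal.mk Ω ≤ Cardinal.mk (Ω × ℕ) :=
    Cardinal.mk_le_of_injective (f := fun x => (x, 0)) fun x y h => (Prod.ext_iff.1 h).1
  obtain ⟨e, he⟩ := glue (zpowersHom _ τ) (zpowersHom _ (α 0))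
    (fun c z h => hτ c.toAdd z h) (fun c z h => hfree c.toAdd z h) (Ω × ℕ) hc1 hc2
  let T : Perm Ω →* Perm (Z × (Ω × ℕ)) :=
    (e.symm.permCongrHom : Perm (Ω × (Ω × ℕ)) →* Perm (Z × (Ω × ℕ))).comp (prodPerm Ω (Ω × ℕ))
  refine ⟨fun i => T (α i), fun i => ?_, fun z k => ?_⟩
  · rw [← map_inv, ← map_mul, ← map_mul, hα, map_pow]
  · have h := he (Multiplicative.ofAdd 1) z k
    have h2 : e (τ z, k) = (α 0 (e (z, k)).1, (e (z, k)).2) := by simpa using h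
    change e.symm (α 0 (e (z, k)).1, (e (z, k)).2) = _
    rw [← h2, e.symm_apply_apply]

/-- Permutations of a set in bijection with a subset, extended by the identity. -/
def extPerm {Y X : Type} (p : X → Prop) [DecidablePred p] (j : Y ≃ {x // p x}) :
    Perm Y →* Perm X :=
  (Perm.ofSubtype (p := p)).comp (j.permCongrHom : Perm Y →* Perm {x // p x})

theorem extPerm_apply {Y X : Type} (p : X → Prop) [DecidablePred p] (j : Y ≃ {x // p x})
    (σ : Perm Y) (y : Y) : extPerm p j σ (j y) = j (σ y) := by
  change Perm.ofSubtype (j.permCongr σ) (j y) = _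
  rw [Perm.ofSubtype_apply_coe]
  simp [Equiv.permCongr_apply]

theorem extPerm_not {Y X : Type} (p : X → Prop) [DecidablePred p] (j : Y ≃ {x // p x})
    (σ : Perm Y) {x : X} (hx : ¬ p x) : extPerm p j σ x = x :=
  Perm.ofSubtype_apply_of_not_mem _ hx

/-- The rationals of `3`-adic norm one. -/
abbrev UnitsAtThree := {w : ℚ // padicNorm 3 w = 1}

theorem norm_three_zpow (n : ℤ) : padicNorm 3 (3 ^ n) = 3 ^ (-n) := by
  have : Fact (Nat.Prime 3) := ⟨Nat.prime_three⟩
  have h3 : padicValRat 3 3 = 1 := padicValRat.self (p := 3) (by norm_num)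
  rw [padicNorm.eq_zpow_of_nonzero (by positivity), padicValRat.zpow, h3, mul_one]
  norm_cast

theorem norm_unit_mul (w : UnitsAtThree) (n : ℤ) : padicNorm 3 (w.1 * 3 ^ n) = 3 ^ (-n) := by
  have : Fact (Nat.Prime 3) := ⟨Nat.prime_three⟩
  rw [padicNorm.mul, w.2, one_mul, norm_three_zpow]

/-- A nonzero rational is a power of three times a rational of `3`-adic norm one. -/
theorem unit_bij (κ : Type) : Function.Bijective
    (fun y : (UnitsAtThree × κ) × ℤ =>
      (⟨(y.1.1.1 * 3 ^ y.2, y.1.2), by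
        have h : y.1.1.1 ≠ 0 := by
          intro h
          have := y.1.1.2
          simp [h] at this
        positivity⟩ : {z : ℚ × κ // z.1 ≠ 0})) := by
  have : Fact (Nat.Prime 3) := ⟨Nat.prime_three⟩
  constructor
  · rintro ⟨⟨w, k⟩, n⟩ ⟨⟨w', k'⟩, n'⟩ h
    simp only [Subtype.mk.injEq, Prod.mk.injEq] at h
    obtain ⟨h, rfl⟩ := h
    have hn := congrArg (padicNorm 3) h
    rw [norm_unit_mul, norm_unit_mul] at hn
    have hn' : n = n' := neg_injective (zpow_right_injective₀ (by norm_num) (by norm_num) hn)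
    subst hn'
    have h3 : (3 : ℚ) ^ n ≠ 0 := by positivity
    rw [Subtype.ext (mul_right_cancel₀ h3 h)]
  · rintro ⟨⟨x, k⟩, hx⟩
    obtain ⟨n, hn⟩ := padicNorm.values_discrete (p := 3) (q := x) hx
    refine ⟨((⟨x * 3 ^ (-n), ?_⟩, k), n), ?_⟩
    · push_cast at hn
      rw [padicNorm.mul, hn, norm_three_zpow, neg_neg, ← zpow_add₀ (by norm_num), neg_add_cancel, zpow_zero]
    · apply Subtype.ext
      refine Prod.ext ?_ rfl
      change x * 3 ^ (-n) * 3 ^ n = x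
      rw [mul_assoc, ← zpow_add₀ (by norm_num), neg_add_cancel, zpow_zero, mul_one]

theorem divRight_zpow {d : ℚ} (hd : d ≠ 0) (n : ℤ) (x : ℚ) :
    ((Equiv.divRight₀ d hd : Perm ℚ) ^ n) x = x * d⁻¹ ^ n := by
  induction n using Int.induction_on generalizing x with
  | zero => simp
  | succ n ih =>
    rw [zpow_add_one, Perm.mul_apply, ih, zpow_add_one₀ (inv_ne_zero hd)]
    simp [div_eq_mul_inv]; ring
  | pred n ih =>
    rw [zpow_sub_one, Perm.mul_apply, ih, zpow_sub_one₀ (inv_ne_zero hd)]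
    have : ((Equiv.divRight₀ d hd : Perm ℚ)⁻¹) x = x * d := by
      rw [Perm.inv_eq_iff_eq]; simp [hd]
    rw [this]; simp; ring

theorem divRight_free {d : ℚ} (hd : 1 < d) {p : ℚ → Prop}
    (hp : ∀ x, p ((Equiv.divRight₀ d (by positivity) : Perm ℚ) x) ↔ p x) (h0 : ¬ p 0) (n : ℤ)
    (x : {x // p x}) (h : ((Perm.subtypePerm _ hp) ^ n) x = x) : n = 0 := by
  have hx : x.1 ≠ 0 := fun h => h0 (h ▸ x.2)
  have h1 := congrArg Subtype.val h
  rw [Perm.subtypePerm_zpow, Perm.subtypePerm_apply] at h1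
  change ((Equiv.divRight₀ d _ : Perm ℚ) ^ n) x.1 = x.1 at h1
  rw [divRight_zpow, mul_eq_left₀ hx, inv_zpow, inv_eq_one] at h1
  exact (zpow_eq_one_iff_right₀ (by positivity) hd.ne').1 h1

/-- An action of the auxiliary group in which the subgroup generated by the `a i` and `c ^ 3`
preserves a set that `c` does not preserve. On `ℚ × κ` the element `c` translates by one, `a 0`
halves and `b 0` divides by three. Writing a nonzero rational as `w * 3 ^ n` with `w` of `3`-adic
norm one, the `a i` act on the coordinates in `UnitsAtThree × κ` only and `b 0` shifts `n`, so they
commute. The set consists of the points whose first coordinate has norm less than one. -/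
theorem exists_action : ∃ (Ω : Type) (ρ : QGen → Perm Ω) (U : Set Ω), (∀ r, relVal ρ r = 1) ∧
    (∀ i x, ρ (.a i) x ∈ U ↔ x ∈ U) ∧ (∀ x, (ρ .c ^ 3) x ∈ U ↔ x ∈ U) ∧
    ∃ x ∈ U, ρ .c x ∉ U := by
  have : Fact (Nat.Prime 3) := ⟨Nat.prime_three⟩
  obtain ⟨Ω, _, α, hα, hfree⟩ := exists_higman
  have hn2 : padicNorm 3 2 = 1 := padicNorm.padicNorm_of_prime_of_ne (p := 3) (q := 2) (by decide)
  have hn3 : padicNorm 3 3 = 3⁻¹ := padicNorm.padicNorm_p_of_prime (p := 3)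
  have hw : ∀ x : ℚ, padicNorm 3 ((Equiv.divRight₀ 2 (by norm_num) : Perm ℚ) x) = 1 ↔
      padicNorm 3 x = 1 := by
    intro x
    change padicNorm 3 (x / 2) = 1 ↔ _
    rw [padicNorm.div, hn2, div_one]
  have hz : ∀ x : ℚ, (Equiv.divRight₀ 3 (by norm_num) : Perm ℚ) x ≠ 0 ↔ x ≠ 0 := by
    intro x
    change x / 3 ≠ 0 ↔ _
    simp
  have : Nonempty UnitsAtThree := ⟨⟨1, padicNorm.one⟩⟩
  have : Nonempty {x : ℚ // x ≠ 0} := ⟨⟨1, one_ne_zero⟩⟩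
  obtain ⟨β, hβ, hβ0⟩ := higman_on α hα hfree (Perm.subtypePerm _ hw)
    (divRight_free (d := 2) (p := fun x => padicNorm 3 x = 1) (by norm_num) hw (by simp))
  obtain ⟨γ, hγ, hγ0⟩ := higman_on α hα hfree (Perm.subtypePerm _ hz)
    (divRight_free (d := 3) (p := fun x => x ≠ 0) (by norm_num) hz (by simp))
  have hκ : Nonempty (Ω × ℕ) := inferInstance
  generalize (Ω × ℕ) = κ at hκ β hβ hβ0 γ hγ hγ0
  classical
  let j := Equiv.ofBijective _ (unit_bij κ)
  have hj : ∀ w k n, ((j ((w, k), n)) : ℚ × κ) = (w.1 * 3 ^ n, k) := fun w k n => rfl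
  let j' : {x : ℚ // x ≠ 0} × κ ≃ {z : ℚ × κ // z.1 ≠ 0} :=
    { toFun := fun y => ⟨(y.1.1, y.2), y.1.2⟩
      invFun := fun z => (⟨z.1.1, z.2⟩, z.1.2)
      left_inv := fun _ => rfl
      right_inv := fun _ => rfl }
  let A : Fin 4 → Perm (ℚ × κ) := fun i => extPerm _ j (prodPerm _ ℤ (β i))
  let B : Fin 4 → Perm (ℚ × κ) := fun i => extPerm _ j' (γ i)
  let c : Perm (ℚ × κ) := prodPerm ℚ κ transl
  have hA : ∀ i y n, A i (j (y, n)) = j (β i y, n) := fun i y n => extPerm_apply _ j _ (y, n)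
  have hA0 : ∀ i k, A i (0, k) = (0, k) := fun i k => extPerm_not _ j _ (by simp)
  have hcases : ∀ (x : ℚ) (k : κ), x = 0 ∨ ∃ (w : UnitsAtThree) (n : ℤ), x = w.1 * 3 ^ n ∧
      ((x, k) : ℚ × κ) = j ((w, k), n) := by
    intro x k
    by_cases h : x = 0
    · exact Or.inl h
    · obtain ⟨⟨⟨w, l⟩, n⟩, hy⟩ := j.surjective ⟨(x, k), h⟩
      have h1 := congrArg Subtype.val hy
      rw [hj] at h1
      obtain ⟨h2, h3⟩ := Prod.ext_iff.1 h1
      have h3' : l = k := h3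
      subst h3'
      exact Or.inr ⟨w, n, h2.symm, by rw [hy]⟩
  have hAhalf : ∀ x k, A 0 (x, k) = (x / 2, k) := by
    intro x k
    rcases hcases x k with rfl | ⟨w, n, rfl, h⟩
    · rw [hA0, zero_div]
    · rw [h, hA, hβ0, hj]
      refine Prod.ext ?_ rfl
      change w.1 / 2 * 3 ^ n = w.1 * 3 ^ n / 2
      ring
  have hBthird : ∀ x k, B 0 (x, k) = (x / 3, k) := by
    intro x k
    by_cases h : x = 0
    · rw [h, zero_div]
      exact extPerm_not _ j' _ (by simp)
    · have h1 : (x, k) = (j' (⟨x, h⟩, k)).1 := rfl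
      rw [h1]
      change extPerm _ j' (γ 0) _ = _
      rw [extPerm_apply, hγ0]
      rfl
  have hpow2 : ∀ x k, (c ^ 2) (x, k) = (x + 2, k) := by
    intro x k
    rw [← map_pow, prodPerm_apply]
    have := transl_zpow 2 x
    norm_cast at this
    rw [this]
  have hpow3 : ∀ x k, (c ^ 3) (x, k) = (x + 3, k) := by
    intro x k
    rw [← map_pow, prodPerm_apply]
    have := transl_zpow 3 x
    norm_cast at this
    rw [this]
  have hc : ∀ x k, c (x, k) = (x + 1, k) := fun _ _ => rfl
  have hshift : B 0 = extPerm _ j (Equiv.prodCongr (Equiv.refl _) (Equiv.subRight (1 : ℤ))) := by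
    ext1 ⟨x, k⟩
    rw [hBthird]
    rcases hcases x k with rfl | ⟨w, n, rfl, h⟩
    · rw [extPerm_not _ j _ (by simp), zero_div]
    · rw [h, extPerm_apply]
      refine Prod.ext ?_ rfl
      change w.1 * 3 ^ n / 3 = w.1 * 3 ^ (n - 1)
      rw [zpow_sub_one₀ (by norm_num)]
      ring
  let ρ : QGen → Perm (ℚ × κ)
    | .a i => A i
    | .b i => B i
    | .c => c
    | .s => 1
  refine ⟨ℚ × κ, ρ, {z | padicNorm 3 z.1 < 1}, ?_, ?_, ?_, ?_⟩
  · rintro (i | i | _ | _ | i | _)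
    · change (A (i + 1))⁻¹ * A i * A (i + 1) * (A i ^ 2)⁻¹ = 1
      rw [mul_inv_eq_one]
      simp only [A]
      rw [← map_inv, ← map_mul, ← map_mul, ← map_pow, ← map_inv, ← map_mul, ← map_mul, ← map_pow,
        hβ]
    · change (B (i + 1))⁻¹ * B i * B (i + 1) * (B i ^ 2)⁻¹ = 1
      rw [mul_inv_eq_one]
      simp only [B]
      rw [← map_inv, ← map_mul, ← map_mul, ← map_pow, hγ]
    · change (A 0)⁻¹ * c * A 0 * (c ^ 2)⁻¹ = 1
      rw [mul_inv_eq_one, mul_assoc, inv_mul_eq_iff_eq_mul]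
      ext1 ⟨x, k⟩
      simp only [Perm.mul_apply, hpow2, hAhalf, hc]
      refine Prod.ext ?_ rfl
      simp only
      ring
    · change (B 0)⁻¹ * c * B 0 * (c ^ 3)⁻¹ = 1
      rw [mul_inv_eq_one, mul_assoc, inv_mul_eq_iff_eq_mul]
      ext1 ⟨x, k⟩
      simp only [Perm.mul_apply, hpow3, hBthird, hc]
      refine Prod.ext ?_ rfl
      simp only
      ring
    · change B 0 * A i * (B 0)⁻¹ * (A i)⁻¹ = 1
      rw [mul_inv_eq_one, mul_inv_eq_iff_eq_mul, hshift]
      simp only [A]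
      rw [← map_mul, ← map_mul]
      rfl
    · rfl
  · rintro i ⟨x, k⟩
    change padicNorm 3 (A i (x, k)).1 < 1 ↔ padicNorm 3 x < 1
    rcases hcases x k with rfl | ⟨w, n, rfl, h⟩
    · rw [hA0]
    · rw [h, hA, hj]
      change padicNorm 3 ((β i (w, k)).1.1 * 3 ^ n) < 1 ↔ _
      rw [norm_unit_mul, norm_unit_mul]
  · rintro ⟨x, k⟩
    rw [hpow3]
    change padicNorm 3 (x + 3) < 1 ↔ padicNorm 3 x < 1
    constructor
    · intro h
      have := padicNorm.sub (p := 3) (q := x + 3) (r := 3)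
      rw [add_sub_cancel_right, hn3] at this
      exact this.trans_lt (max_lt h (by norm_num))
    · intro h
      have := padicNorm.nonarchimedean (p := 3) (q := x) (r := 3)
      rw [hn3] at this
      exact this.trans_lt (max_lt h (by norm_num))
  · obtain ⟨k⟩ := hκ
    refine ⟨(0, k), by simp, ?_⟩
    change ¬ padicNorm 3 (0 + 1) < 1
    simp

end strict

/-! ### The concrete twists -/

section data
open FreeGroup (of of_ne_one)

theorem relVal_mem {Γ : Type*} [Group Γ] (S : Subgroup Γ) {u : QGen → Γ} (h : ∀ i, u i ∈ S)
    (r : QRel) : relVal u r ∈ S := by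
  have h1 := map_relVal S.subtype (fun i => (⟨u i, h i⟩ : S)) r
  change _ = relVal u r at h1
  rw [← h1]
  exact SetLike.coe_mem _

/-- The group rotating the letters. -/
abbrev A0 := Equiv.Perm (Fin 3)

/-- The classes of letters: one for each generator of the auxiliary group, and an extra class. -/
abbrev P0 := Option QGen

/-- The free group on the letters. -/
abbrev FX := FreeGroup (P0 × A0)

/-- The letter of a generator of the auxiliary group, rotated by `k`. -/
def lx (i : QGen) (k : A0) : FX := of (some i, k)

/-- The extra letter, rotated by `k`. -/
def lt (k : A0) : FX := of (none, k)

/-- Indices of the twisting automorphisms. The twists `pinX` and `pinT` pin the classes of letters.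
The others arrange that the kernel of the projection to the auxiliary group is small: `conj` conjugates
the extra letter by another letter, `rel` multiplies it by a relator, and `mix` multiplies it by the
quotient of two rotations of a letter. Finally `kill` multiplies the letter of `s` by the extra
letter, so that homomorphisms to `A0` invariant under the twists are trivial on the extra letter. -/
inductive JIdx
  | pinX (i : QGen) | pinT | conj (i : QGen) (k : A0) | rel (r : QRel)
  | mix (i : QGen) (k : {k : A0 // k ≠ 1}) | kill

instance : Finite JIdx :=
  Finite.of_injective (β := (QGen ⊕ (QGen × A0)) ⊕ (QRel ⊕ (QGen × {k : A0 // k ≠ 1})) ⊕ Bool)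
    (fun
      | .pinX i => .inl (.inl i)
      | .conj i k => .inl (.inr (i, k))
      | .rel r => .inr (.inl (.inl r))
      | .mix i k => .inr (.inl (.inr (i, k)))
      | .pinT => .inr (.inr true)
      | .kill => .inr (.inr false))
    (by rintro (i | _ | i | i | i | _) (j | _ | j | j | j | _) h <;> simp_all)

/-- The class moved by each twist. -/
def cls0 : JIdx → P0
  | .pinX i => some i
  | .kill => some .s
  | _ => none

/-- The left multiplier of each twist. Together with `v0` it is chosen so that the twist is compatible
with the projection to the auxiliary group. -/
def u0 : JIdx → FX
  | .pinX _ => lt 1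
  | .pinT => lx .s 1
  | .conj i k => lx i k
  | _ => 1

/-- The right multiplier of each twist. -/
def v0 : JIdx → FX
  | .pinX _ => lt 1
  | .pinT => lx .s 1
  | .conj i k => (lx i k)⁻¹
  | .rel r => relVal (fun i => lx i 1) r
  | .mix i k => lx i 1 * (lx i k)⁻¹
  | .kill => lt 1

theorem lx_mem (i : QGen) (k : A0) : lx i k ∈ RestOf A0 (none : P0) :=
  of_mem_rest (by simp)

theorem lt_mem (i : QGen) (k : A0) : lt k ∈ RestOf A0 (some i : P0) :=
  of_mem_rest (by simp)

/-- The concrete family of twists. -/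
def D0 : TwistData P0 A0 JIdx where
  cls := cls0
  u := u0
  v := v0
  hu := by
    rintro (i | _ | ⟨i, k⟩ | r | ⟨i, k⟩ | _)
    exacts [lt_mem _ _, lx_mem _ _, lx_mem _ _, one_mem _, one_mem _, one_mem _]
  hv := by
    rintro (i | _ | ⟨i, k⟩ | r | ⟨i, k⟩ | _)
    exacts [lt_mem _ _, lx_mem _ _, inv_mem (lx_mem _ _), relVal_mem _ (fun i => lx_mem i 1) r,
      mul_mem (lx_mem _ _) (inv_mem (lx_mem _ _)), lt_mem _ _]

theorem relVal_letters_ne (r : QRel) : relVal (fun i => lx i 1) r ≠ 1 := by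
  intro h
  let f : FX →* Multiplicative ℤ := FreeGroup.lift fun _ => Multiplicative.ofAdd 1
  let g : FX →* Equiv.Perm (Fin 3) := FreeGroup.lift fun x => match x.1 with
    | some (.b _) => Equiv.swap 0 1
    | _ => Equiv.swap 1 2
  have hf := congrArg f h
  have hg := congrArg g h
  have hfx : ∀ i, f (lx i 1) = Multiplicative.ofAdd 1 := fun i => FreeGroup.lift_apply_of
  have hgb : ∀ i, g (lx (.b i) 1) = Equiv.swap 0 1 := fun i => FreeGroup.lift_apply_of
  have hga : ∀ i, g (lx (.a i) 1) = Equiv.swap 1 2 := fun i => FreeGroup.lift_apply_of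
  rw [map_relVal, map_one] at hf hg
  simp only [hfx] at hf
  cases r with
  | comm i =>
    simp only [relVal, hgb, hga] at hg
    revert hg
    decide
  | _ => exact absurd hf (by simp only [relVal]; decide)

theorem rel_nontriv (j : JIdx) : D0.u j ≠ 1 ∨ D0.v j ≠ 1 := by
  rcases j with i | _ | ⟨i, k⟩ | r | ⟨i, k⟩ | _
  · exact Or.inl (of_ne_one _)
  · exact Or.inl (of_ne_one _)
  · exact Or.inl (of_ne_one _)
  · exact Or.inr (relVal_letters_ne r)
  · refine Or.inr fun h => ?_
    have h1 : lx i 1 = lx i k := mul_inv_eq_one.1 h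
    have h2 := (Prod.ext_iff.1 (FreeGroup.of_injective h1)).2
    exact k.2 h2.symm
  · exact Or.inr (of_ne_one _)

theorem beta_lt (j : JIdx) (h : cls0 j = none) :
    D0.beta j (lt 1) = u0 j * lt 1 * v0 j := by
  have := D0.beta_of j (none, 1) h.symm
  rw [map_one] at this
  exact this

theorem beta_lx (j : JIdx) (i : QGen) (h : cls0 j = some i) :
    D0.beta j (lx i 1) = u0 j * lx i 1 * v0 j := by
  have := D0.beta_of j (some i, 1) h.symm
  rw [map_one] at this
  exact this

theorem rot_lx (g : A0) (i : QGen) (k : A0) : rot (P := P0) g (lx i k) = lx i (g * k) := rot_of _ _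

theorem rot_lt (g k : A0) : rot (P := P0) g (lt k) = lt (g * k) := rot_of _ _

/-- The concrete family of twists satisfies the rigidity conditions. -/
def rigid0 : D0.Rigid where
  pin
    | some i => .pinX i
    | none => .pinT
  cls_pin := by rintro (_ | i) <;> rfl
  pin_ne := by
    rintro (_ | i)
    · exact ⟨some .s, by simp, rfl, rfl⟩
    · exact ⟨none, by simp, rfl, rfl⟩
  nontriv := rel_nontriv
  ne_one := exists_ne _
  center := perm3_center
  hom_trivial := by
    intro f hrot hbeta
    have hs : f (lx .s 1) = 1 := by
      have h := hbeta (.rel .s) (lt 1)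
      rw [beta_lt _ rfl] at h
      change f (1 * lt 1 * lx .s 1) = _ at h
      rw [one_mul, map_mul] at h
      exact mul_eq_left.1 h
    have ht : f (lt 1) = 1 := by
      have h := hbeta .kill (lx .s 1)
      rw [beta_lx _ .s rfl] at h
      change f (1 * lx .s 1 * lt 1) = _ at h
      rw [one_mul, map_mul] at h
      exact mul_eq_left.1 h
    have hx : ∀ i, f (lx i 1) = 1 := by
      intro i
      refine perm3_center _ fun k => ?_
      by_cases hk : k = 1
      · rw [hk, mul_one, one_mul]
      · have h := hbeta (.mix i ⟨k, hk⟩) (lt 1)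
        rw [beta_lt _ rfl] at h
        change f (1 * lt 1 * (lx i 1 * (lx i k)⁻¹)) = _ at h
        rw [one_mul, map_mul, mul_eq_left, map_mul, map_inv, mul_inv_eq_one] at h
        have h2 := hrot k (lx i 1)
        rw [rot_lx, mul_one, ← h] at h2
        rw [eq_mul_inv_iff_mul_eq] at h2
        exact h2
    have hall : f = 1 := by
      ext1 ⟨p, k⟩
      have h2 := hrot k (of (p, 1))
      rw [rot_of, mul_one] at h2
      rw [h2, MonoidHom.one_apply]
      have h3 : f (of (p, 1)) = 1 := by
        rcases p with _ | i
        exacts [ht, hx i]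
      rw [h3, mul_one, mul_inv_cancel]
    intro w
    rw [hall, MonoidHom.one_apply]

/-- The main group. -/
abbrev G0 := D0.GGroup

theorem G0_coHopf : IsCoHopfian G0 := TwistData.isCoHopfian rigid0

theorem E0_fp : Group.IsFinitelyPresented (TwistData.EGroup A0 JIdx) := semidirect_fp _

theorem E0_fg : Group.FG (TwistData.EGroup A0 JIdx) := by
  obtain ⟨n, φ, hφ, -⟩ := E0_fp
  exact Group.fg_of_surjective hφ

theorem G0_fp : IsFinitelyPresented G0 := by
  have := E0_fp
  have := E0_fg
  have : Group.IsFinitelyPresented G0 := semidirect_fp _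
  exact Group.IsFinitelyPresented.exists_mulEquiv_presentedGroup

theorem G0_rf : IsResiduallyFinite G0 :=
  semidirect_rf _ (freeGroup_rf _) (semidirect_rf _ (freeGroup_rf _) (finite_rf _))

end data

/-! ### The projection to the auxiliary group and the subgroup -/

section proj
open SemidirectProduct
open FreeGroup (of)

/-- The auxiliary group. -/
abbrev Q0 := PresentedGroup (Set.range (relVal fun i : QGen => FreeGroup.of i))

/-- The generators of the auxiliary group. -/
def qq (i : QGen) : Q0 := PresentedGroup.of i

theorem relVal_qq (r : QRel) : relVal qq r = 1 := by
  have h : PresentedGroup.mk (Set.range (relVal fun i : QGen => FreeGroup.of i))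
      (relVal (fun i : QGen => FreeGroup.of i) r) = 1 :=
    PresentedGroup.one_of_mem ⟨r, rfl⟩
  rw [map_relVal] at h
  exact h

/-- The homomorphism out of the auxiliary group given by a tuple satisfying the relations. -/
theorem exists_lift {Γ : Type*} [Group Γ] (u : QGen → Γ) (h : ∀ r, relVal u r = 1) :
    ∃ f : Q0 →* Γ, ∀ i, f (qq i) = u i := by
  have h' : ∀ x ∈ Set.range (relVal fun i : QGen => FreeGroup.of i), FreeGroup.lift u x = 1 := by
    rintro _ ⟨r, rfl⟩
    rw [map_relVal]
    simp only [FreeGroup.lift_apply_of]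
    exact h r
  exact ⟨PresentedGroup.toGroup h', fun i => PresentedGroup.toGroup.of h'⟩

/-- The projection of the free group on the letters to the auxiliary group. -/
def pX : FX →* Q0 := FreeGroup.lift fun x => match x.1 with
  | some i => qq i
  | none => 1

theorem pX_lx (i : QGen) (k : A0) : pX (lx i k) = qq i := FreeGroup.lift_apply_of

theorem pX_lt (k : A0) : pX (lt k) = 1 := FreeGroup.lift_apply_of

theorem pX_rot (g : A0) (w : FX) : pX (rot g w) = pX w := by
  have : pX.comp (rot g).toMonoidHom = pX := by
    ext x
    change pX (rot g (of x)) = _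
    rw [rot_of]
    rcases x with ⟨_ | i, k⟩
    · exact (pX_lt _).trans (pX_lt _).symm
    · exact (pX_lx _ _).trans (pX_lx _ _).symm
  exact DFunLike.congr_fun this w

theorem pX_beta (j : JIdx) (w : FX) : pX (D0.beta j w) = pX w := by
  have : pX.comp (D0.beta j).toMonoidHom = pX := by
    ext x
    change pX (D0.beta j (of x)) = _
    by_cases hx : x.1 = cls0 j
    · rw [D0.beta_of j x hx, map_mul, map_mul, pX_rot, pX_rot]
      change pX (u0 j) * _ * pX (v0 j) = _
      rcases x with ⟨p, k⟩
      have hp : p = cls0 j := hx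
      subst hp
      have hs : qq .s = 1 := relVal_qq .s
      rcases j with i | _ | ⟨i, k⟩ | r | ⟨i, k⟩ | _
      · simp [u0, v0, pX_lt]
      · simp [u0, v0, pX_lx, hs]
      · change pX (lx _ _) * pX (lt _) * pX (lx _ _)⁻¹ = pX (lt _)
        rw [pX_lt, mul_one, ← map_mul, mul_inv_cancel, map_one]
      · change pX 1 * pX (lt k) * pX (relVal (fun i => lx i 1) r) = pX (lt k)
        rw [map_relVal]
        simp only [pX_lx]
        have := relVal_qq r
        simp only [this, map_one, one_mul, mul_one]
      · change pX 1 * pX (lt _) * pX (lx _ _ * (lx _ _)⁻¹) = pX (lt _)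
        rw [map_mul, map_inv, pX_lx, pX_lx]
        simp
      · simp [u0, v0, pX_lt]
    · rw [D0.beta_rest j (of_mem_rest hx)]
  exact DFunLike.congr_fun this w

theorem pX_act (e : TwistData.EGroup A0 JIdx) (w : FX) : pX (D0.actE e w) = pX w := by
  have h1 : ∀ (y : FreeGroup (JIdx × Fin 4)) w, pX (D0.actE (inl y) w) = pX w := by
    intro y
    induction y using FreeGroup.induction_on with
    | C1 => intro w; rw [map_one, map_one, MulAut.one_apply]
    | of y => intro w; rw [TwistData.actE_y]; exact pX_beta _ _
    | inv_of y h =>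
      intro w
      rw [← h, map_inv, map_inv, MulAut.apply_inv_self]
    | mul x y hx hy => intro w; rw [map_mul, map_mul, MulAut.mul_apply, hx, hy]
  rw [← inl_left_mul_inr_right e, map_mul, MulAut.mul_apply, h1, TwistData.actE_a, pX_rot]

/-- The projection of the main group to the auxiliary group. -/
noncomputable def pG : G0 →* Q0 := SemidirectProduct.lift pX 1 (by
  intro e
  ext w : 1
  change pX (D0.actE e (of w)) = MulAut.conj (1 : Q0) (pX (of w))
  rw [pX_act, map_one, MulAut.one_apply])

theorem pG_inl (w : FX) : pG (inl w) = pX w := SemidirectProduct.lift_inl _ _ _ _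

theorem pG_inr (e : TwistData.EGroup A0 JIdx) : pG (inr e) = 1 := SemidirectProduct.lift_inr _ _ _ _

/-- The subgroup generated by the acting group and one extra letter; it is the kernel of the
projection to the auxiliary group. -/
noncomputable def NT : Subgroup G0 := (inr : TwistData.EGroup A0 JIdx →* G0).range ⊔
  Subgroup.zpowers (inl (lt 1))

theorem NT_fg : NT.FG := by
  have := E0_fg
  refine Subgroup.FG.sup ?_ ⟨{inl (lt 1)}, by simp [Subgroup.zpowers_eq_closure]⟩
  exact (Group.fg_iff_subgroup_fg _).1 inferInstance

/-- The part of the kernel in the free group on the letters. -/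
noncomputable def MT : Subgroup FX := NT.comap inl

theorem act_mem_MT (e : TwistData.EGroup A0 JIdx) {w : FX} (hw : w ∈ MT) : D0.actE e w ∈ MT := by
  have hr : ∀ e, (inr e : G0) ∈ NT := fun e => Subgroup.mem_sup_left ⟨e, rfl⟩
  change inl _ ∈ NT
  rw [inl_aut]
  exact mul_mem (mul_mem (hr _) hw) (hr _)

theorem rot_mem_MT (g : A0) {w : FX} (hw : w ∈ MT) : rot g w ∈ MT := by
  have := act_mem_MT (inr (g, 1)) hw
  rwa [TwistData.actE_a] at this

theorem beta_mem_MT (j : JIdx) {w : FX} (hw : w ∈ MT) : D0.beta j w ∈ MT := by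
  have := act_mem_MT (inl (of (j, 0))) hw
  rwa [TwistData.actE_y] at this

theorem lt_mem_MT : lt 1 ∈ MT := Subgroup.mem_sup_right (Subgroup.mem_zpowers _)

/-- A conjugate of the extra letter by a word in the other letters is its image under an element of
the acting group fixing the other letters. -/
theorem exists_conj_act {v : FX} (hv : v ∈ RestOf A0 (none : P0)) :
    ∃ e, D0.actE e (lt 1) = v * lt 1 * v⁻¹ ∧ ∀ w ∈ RestOf A0 (none : P0), D0.actE e w = w := by
  induction hv using Subgroup.closure_induction with
  | mem x hx =>
    obtain ⟨⟨p, k⟩, hp, rfl⟩ := hx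
    obtain ⟨i, rfl⟩ := Option.ne_none_iff_exists'.1 hp
    refine ⟨inl (of (.conj i k, 0)), ?_, ?_⟩
    · rw [TwistData.actE_y]
      exact beta_lt (.conj i k) rfl
    · intro w hw
      rw [TwistData.actE_y]
      exact D0.beta_rest (.conj i k) hw
  | one => exact ⟨1, by simp, by simp⟩
  | mul x y hx hy h1 h2 =>
    obtain ⟨e, he1, he2⟩ := h1
    obtain ⟨e', he1', he2'⟩ := h2
    refine ⟨e' * e, ?_, fun w hw => ?_⟩
    · rw [map_mul, MulAut.mul_apply, he1, map_mul, map_mul, map_inv, he2' x hx, he1']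
      group
    · rw [map_mul, MulAut.mul_apply, he2 w hw, he2' w hw]
  | inv x hx h1 =>
    obtain ⟨e, he1, he2⟩ := h1
    have h2 : ∀ w ∈ RestOf A0 (none : P0), D0.actE e⁻¹ w = w := by
      intro w hw
      conv_lhs => rw [← he2 w hw]
      rw [map_inv, MulAut.inv_apply_self]
    refine ⟨e⁻¹, ?_, h2⟩
    have h3 := congrArg (D0.actE e⁻¹) he1
    rw [map_mul, map_mul, map_inv (D0.actE e⁻¹), h2 x hx] at h3
    rw [map_inv, MulAut.inv_apply_self] at h3
    rw [map_inv]
    conv_rhs => rw [h3]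
    group

theorem conj_lt_mem {v : FX} (hv : v ∈ RestOf A0 (none : P0)) (g : A0) :
    v * lt g * v⁻¹ ∈ MT := by
  obtain ⟨e, he, -⟩ := exists_conj_act (rot_mem_rest g⁻¹ hv)
  have h1 := act_mem_MT e lt_mem_MT
  rw [he] at h1
  have h2 := rot_mem_MT g h1
  rw [map_mul, map_mul, map_inv, rot_lt, mul_one, map_inv, MulAut.apply_inv_self] at h2
  exact h2

/-- The twist `j` maps `v t v⁻¹`, with `t` the extra letter, to `(v t v⁻¹) (v (v0 j) v⁻¹)`, so the second
factor lies in `MT`. -/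
theorem conj_val_mem {v : FX} (hv : v ∈ RestOf A0 (none : P0)) (j : JIdx) (hj : cls0 j = none)
    (hu : u0 j = 1) : v * v0 j * v⁻¹ ∈ MT := by
  have h0 := conj_lt_mem hv 1
  have h1 := beta_mem_MT j h0
  have h2 : D0.beta j v = v := D0.beta_rest j (by
    change v ∈ RestOf A0 (cls0 j)
    rwa [hj])
  rw [map_mul, map_mul, map_inv, h2, beta_lt j hj, hu, one_mul] at h1
  have h3 := mul_mem (inv_mem h0) h1
  convert h3 using 1
  group

/-- `MT` contains all conjugates of extra letters by words in the other letters, so every word can be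
moved into the form `m * v` with `v` a word in the other letters. -/
theorem exists_split (y : FX) : ∃ m ∈ MT, ∃ v ∈ RestOf A0 (none : P0), y = m * v := by
  have key : ∀ y z : FX, (∃ m ∈ MT, ∃ v ∈ RestOf A0 (none : P0), z = m * v) →
      ∃ m ∈ MT, ∃ v ∈ RestOf A0 (none : P0), z * y = m * v := by
    intro y
    induction y using FreeGroup.induction_on with
    | C1 => intro z h; rwa [mul_one]
    | of x =>
      rintro _ ⟨m, hm, v, hv, rfl⟩
      rcases x with ⟨_ | i, k⟩
      · exact ⟨m * (v * lt k * v⁻¹), mul_mem hm (conj_lt_mem hv k), v, hv, by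
          change m * v * lt k = _; group⟩
      · exact ⟨m, hm, v * lx i k, mul_mem hv (lx_mem i k), mul_assoc _ _ _⟩
    | inv_of x _ =>
      rintro _ ⟨m, hm, v, hv, rfl⟩
      rcases x with ⟨_ | i, k⟩
      · exact ⟨m * (v * lt k * v⁻¹)⁻¹, mul_mem hm (inv_mem (conj_lt_mem hv k)), v, hv, by
          change m * v * (lt k)⁻¹ = _; group⟩
      · exact ⟨m, hm, v * (lx i k)⁻¹, mul_mem hv (inv_mem (lx_mem i k)), mul_assoc _ _ _⟩
    | mul x y hx hy =>
      intro z h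
      rw [← mul_assoc]
      exact hy _ (hx _ h)
  have := key y 1 ⟨1, one_mem _, 1, one_mem _, (one_mul _).symm⟩
  rwa [one_mul] at this

/-- By `exists_split`, it suffices to test conjugates by words in the other letters. -/
theorem mem_core {z : FX} (h : ∀ v ∈ RestOf A0 (none : P0), v * z * v⁻¹ ∈ MT) :
    z ∈ MT.normalCore := by
  intro y
  obtain ⟨m, hm, v, hv, rfl⟩ := exists_split y
  have := mul_mem (mul_mem hm (h v hv)) (inv_mem hm)
  convert this using 1
  group

/-- The quotient by the normal core of `MT` kills the extra letters, identifies the rotations of a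
letter, and satisfies the relations; it is therefore a quotient of the auxiliary group. -/
theorem ker_pX_le : pX.ker ≤ MT := by
  let M1 := MT.normalCore
  have ht : ∀ k, QuotientGroup.mk' M1 (lt k) = 1 := fun k =>
    (QuotientGroup.eq_one_iff _).2 (mem_core fun v hv => conj_lt_mem hv k)
  have hr : ∀ r, relVal (fun i => QuotientGroup.mk' M1 (lx i 1)) r = 1 := fun r => by
    rw [← map_relVal]
    exact (QuotientGroup.eq_one_iff _).2 (mem_core fun v hv => conj_val_mem hv (.rel r) rfl rfl)
  have hm : ∀ i k, QuotientGroup.mk' M1 (lx i k) = QuotientGroup.mk' M1 (lx i 1) := fun i k => by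
    by_cases hk : k = 1
    · rw [hk]
    · have h : QuotientGroup.mk' M1 (lx i 1 * (lx i k)⁻¹) = 1 := (QuotientGroup.eq_one_iff _).2
        (mem_core fun v hv => conj_val_mem hv (.mix i ⟨k, hk⟩) rfl rfl)
      rw [map_mul, map_inv, mul_inv_eq_one] at h
      exact h.symm
  obtain ⟨f, hf⟩ := exists_lift _ hr
  have hc : f.comp pX = QuotientGroup.mk' M1 := by
    ext ⟨_ | i, k⟩
    · change f (pX (lt k)) = QuotientGroup.mk' M1 (lt k)
      rw [pX_lt, map_one, ht]
    · change f (pX (lx i k)) = QuotientGroup.mk' M1 (lx i k)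
      rw [pX_lx, hf]
      exact (hm i k).symm
  intro w hw
  have h1 : QuotientGroup.mk' M1 w = 1 := by
    rw [← hc, MonoidHom.comp_apply, MonoidHom.mem_ker.1 hw, map_one]
  exact MT.normalCore_le ((QuotientGroup.eq_one_iff _).1 h1)

/-- The kernel of the projection is generated by the acting group and one extra letter. -/
theorem ker_pG : pG.ker = NT := by
  apply le_antisymm
  · intro z hz
    rw [MonoidHom.mem_ker, ← inl_left_mul_inr_right z, map_mul, pG_inr, mul_one, pG_inl] at hz
    rw [← inl_left_mul_inr_right z]
    exact mul_mem (ker_pX_le hz) (Subgroup.mem_sup_left ⟨_, rfl⟩)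
  · rw [NT, sup_le_iff, Subgroup.zpowers_le]
    refine ⟨?_, ?_⟩
    · rintro _ ⟨e, rfl⟩
      exact pG_inr e
    · exact (pG_inl _).trans (pX_lt 1)

/-- The letters generating the finitely generated subgroup modulo the kernel. -/
def sLetters : Set QGen := {i | i = .c ∨ ∃ k, i = .a k}

/-- The subgroup of the auxiliary group. -/
def SQ : Subgroup Q0 := Subgroup.closure (qq '' sLetters)

/-- The finitely generated subgroup that is conjugate into itself. -/
noncomputable def H0 : Subgroup G0 := SQ.comap pG

/-- `H0` is generated by the finitely generated kernel and finitely many letters. -/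
theorem H0_fg : H0.FG := by
  have h : SQ = (Subgroup.closure ((fun i => (inl (lx i 1) : G0)) '' sLetters)).map pG := by
    rw [MonoidHom.map_closure, Set.image_image]
    simp only [pG_inl, pX_lx]
    rfl
  rw [H0, h, Subgroup.comap_map_eq, ker_pG]
  refine Subgroup.FG.sup ?_ NT_fg
  rw [Subgroup.fg_iff]
  exact ⟨_, rfl, Set.toFinite _⟩

/-- The conjugating element. -/
noncomputable def g0 : G0 := inl (lx (.b 0) 1)

theorem pG_g0 : pG g0 = qq (.b 0) := (pG_inl _).trans (pX_lx _ _)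

/-- Conjugation by `(b 0)⁻¹` fixes the `a i` and maps `c` to `c ^ 3`. -/
theorem conj_SQ_le : SQ.map (MulAut.conj (qq (.b 0))⁻¹).toMonoidHom ≤
    Subgroup.closure (Set.range (fun k => qq (.a k)) ∪ {qq .c ^ 3}) := by
  rw [SQ, MonoidHom.map_closure, Subgroup.closure_le]
  rintro _ ⟨_, ⟨i, hi, rfl⟩, rfl⟩
  change MulAut.conj (qq (.b 0))⁻¹ (qq i) ∈ _
  rw [MulAut.conj_apply, inv_inv]
  rcases hi with rfl | ⟨k, rfl⟩
  · have h : (qq (.b 0))⁻¹ * qq .c * qq (.b 0) = qq .c ^ 3 := mul_inv_eq_one.1 (relVal_qq .bc)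
    rw [h]
    exact Subgroup.subset_closure (Or.inr rfl)
  · have h : qq (.b 0) * qq (.a k) = qq (.a k) * qq (.b 0) :=
      mul_inv_eq_iff_eq_mul.1 (mul_inv_eq_one.1 (relVal_qq (.comm k)))
    have h2 : (qq (.b 0))⁻¹ * qq (.a k) * qq (.b 0) = qq (.a k) := by
      rw [mul_assoc, ← h, inv_mul_cancel_left]
    rw [h2]
    exact Subgroup.subset_closure (Or.inl ⟨k, rfl⟩)

theorem closure_le_SQ : Subgroup.closure (Set.range (fun k => qq (.a k)) ∪ {qq .c ^ 3}) ≤ SQ := by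
  rw [Subgroup.closure_le]
  rintro _ (⟨k, rfl⟩ | rfl)
  · exact Subgroup.subset_closure ⟨_, Or.inr ⟨k, rfl⟩, rfl⟩
  · have h : qq .c ∈ SQ := Subgroup.subset_closure ⟨_, Or.inl rfl, rfl⟩
    exact pow_mem h 3

/-- The set provided by `exists_action` is preserved by the `a i` and `c ^ 3`, but not by `c`. -/
theorem qc_notMem : qq .c ∉ Subgroup.closure (Set.range (fun k => qq (.a k)) ∪ {qq .c ^ 3}) := by
  obtain ⟨Ω, ρ, U, hρ, ha, hc, x, hx, hcx⟩ := exists_action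
  obtain ⟨f, hf⟩ := exists_lift ρ hρ
  intro h
  have key : ∀ z ∈ Subgroup.closure (Set.range (fun k => qq (.a k)) ∪ {qq .c ^ 3}),
      ∀ x, f z x ∈ U ↔ x ∈ U := by
    intro z hz
    induction hz using Subgroup.closure_induction with
    | mem z hz =>
      rcases hz with ⟨k, rfl⟩ | rfl
      · intro x; simp only [hf]; exact ha k x
      · intro x; rw [map_pow, hf]; exact hc x
    | one => simp
    | mul y z _ _ hy hz => intro x; rw [map_mul, Equiv.Perm.mul_apply, hy, hz]
    | inv z _ hz =>
      intro x
      rw [← hz, ← Equiv.Perm.mul_apply, ← map_mul, mul_inv_cancel, map_one, Equiv.Perm.one_apply]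
  have := (key _ h x).2 hx
  rw [hf] at this
  exact hcx this

theorem conj_H0_lt : Subgroup.map (MulAut.conj g0⁻¹).toMonoidHom H0 < H0 := by
  have hle : ∀ z ∈ Subgroup.map (MulAut.conj g0⁻¹).toMonoidHom H0,
      pG z ∈ Subgroup.closure (Set.range (fun k => qq (.a k)) ∪ {qq .c ^ 3}) := by
    rintro _ ⟨z, hz, rfl⟩
    refine conj_SQ_le ⟨pG z, hz, ?_⟩
    change MulAut.conj (qq (.b 0))⁻¹ (pG z) = pG (MulAut.conj g0⁻¹ z)
    rw [MulAut.conj_apply, MulAut.conj_apply, map_mul, map_mul, map_inv, map_inv, map_inv, pG_g0]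
  refine lt_of_le_of_ne (fun z hz => closure_le_SQ (hle z hz)) fun heq => ?_
  have h1 : (inl (lx .c 1) : G0) ∈ H0 := by
    change pG (inl (lx .c 1)) ∈ SQ
    rw [pG_inl, pX_lx]
    exact Subgroup.subset_closure ⟨_, Or.inl rfl, rfl⟩
  rw [← heq] at h1
  have h2 := hle _ h1
  rw [pG_inl, pX_lx] at h2
  exact qc_notMem h2

end proj

/-! ### Finite quotients -/

section quot

/-- If every finite quotient of `H` killing `N` kills a set generating `H` modulo `N`, then every
finite quotient of `H` is the image of `N`. -/
theorem surj_on_normal {G : Type*} [Group G] (N H : Subgroup G) [N.Normal] (S : Set G)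
    (hH : H = Subgroup.closure S ⊔ N)
    (hdead : ∀ (F' : Type) [Group F'] [Finite F'] (ψ : H →* F'),
      (∀ n : H, (n : G) ∈ N → ψ n = 1) → ∀ x : H, (x : G) ∈ S → ψ x = 1)
    (F : Type) [Group F] [Finite F] (f : H →* F) (hf : Function.Surjective f) (y : F) :
    ∃ n : H, (n : G) ∈ N ∧ f n = y := by
  let M := (N.subgroupOf H).map f
  have hM : M.Normal := Subgroup.Normal.map inferInstance f hf
  let ψ := (QuotientGroup.mk' M).comp f
  have h1 : ∀ n : H, (n : G) ∈ N → ψ n = 1 := fun n hn =>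
    (QuotientGroup.eq_one_iff _).2 ⟨n, hn, rfl⟩
  have h2 := hdead (F ⧸ M) ψ h1
  have hS : Subgroup.closure S ≤ H := hH ▸ le_sup_left
  have hN : N ≤ H := hH ▸ le_sup_right
  have h3 : H ≤ ψ.ker.map H.subtype := by
    conv_lhs => rw [hH]
    rw [sup_le_iff, Subgroup.closure_le]
    exact ⟨fun x hx => ⟨⟨x, hS (Subgroup.subset_closure hx)⟩, h2 _ hx, rfl⟩,
      fun x hx => ⟨⟨x, hN hx⟩, h1 _ hx, rfl⟩⟩
  obtain ⟨h, rfl⟩ := hf y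
  obtain ⟨h', hk, he⟩ := h3 h.2
  have he' : h' = h := Subtype.ext he
  subst he'
  obtain ⟨n, hn, hn'⟩ := (QuotientGroup.eq_one_iff _).1 (show ((f h' : F) : F ⧸ M) = 1 from hk)
  exact ⟨n, hn, hn'⟩

/-- Conjugacy of homomorphisms by elements of the target. -/
def homSetoid (N F : Type*) [Group N] [Group F] : Setoid (N →* F) where
  r f f' := ∃ u : F, ∀ n, f' n = u * f n * u⁻¹
  iseqv :=
    { refl := fun f => ⟨1, by simp⟩
      symm := by
        rintro f f' ⟨u, hu⟩
        exact ⟨u⁻¹, fun n => by rw [hu]; group⟩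
      trans := by
        rintro f f' f'' ⟨u, hu⟩ ⟨v, hv⟩
        exact ⟨v * u, fun n => by rw [hv, hu]; group⟩ }

/-- The action of a group on conjugacy classes of homomorphisms from a normal subgroup. -/
@[reducible] def homAction {G : Type*} [Group G] (N : Subgroup G) [N.Normal] (F : Type*) [Group F] :
    MulAction G (Quotient (homSetoid N F)) where
  smul g := Quotient.map (fun f => f.comp (MulAut.conjNormal g⁻¹).toMonoidHom) (by
    rintro f f' ⟨u, hu⟩
    exact ⟨u, fun n => hu _⟩)
  one_smul := by
    rintro ⟨f⟩
    refine Quotient.sound ⟨1, fun n => ?_⟩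
    change f n = 1 * f (MulAut.conjNormal 1⁻¹ n) * 1⁻¹
    simp
  mul_smul := by
    rintro g h ⟨f⟩
    refine Quotient.sound ⟨1, fun n => ?_⟩
    change f (MulAut.conjNormal h⁻¹ (MulAut.conjNormal g⁻¹ n)) =
      1 * f (MulAut.conjNormal (g * h)⁻¹ n) * 1⁻¹
    rw [mul_inv_rev, map_mul, MulAut.mul_apply]
    simp

/-- Conjugation by the generators acts on a homomorphism from the normal subgroup to a finite group
as conjugation in the target, because the permutations of the finite set of conjugacy classes of
homomorphisms satisfy the dead relations. -/
theorem exists_conj {G : Type*} [Group G] (N : Subgroup G) [N.Normal] [Group.FG N]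
    (x : QGen → G) (hx : ∀ r, relVal x r ∈ N) {F : Type*} [Group F] [Finite F] (f : N →* F)
    (i : QGen) : ∃ u : F, ∀ n, f (MulAut.conjNormal (x i) n) = u * f n * u⁻¹ := by
  have := finite_monoidHom N F
  let _ := homAction N F
  let ρ := MulAction.toPermHom G (Quotient (homSetoid N F))
  have hN : ∀ n ∈ N, ρ n = 1 := by
    intro n hn
    ext ⟨f⟩
    refine Quotient.sound ⟨f ⟨n, hn⟩, fun m => ?_⟩
    change f m = f ⟨n, hn⟩ * f (MulAut.conjNormal n⁻¹ m) * (f ⟨n, hn⟩)⁻¹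
    rw [← map_inv, ← map_mul, ← map_mul]
    congr 1
    ext
    simp
    group
  have h1 := gen_dead (fun i => ρ (x i)) (fun r => by rw [← map_relVal]; exact hN _ (hx r)) i
  have h2 : ρ (x i)⁻¹ = 1 := by rw [map_inv, h1, inv_one]
  obtain ⟨u, hu⟩ := Quotient.exact (DFunLike.congr_fun h2 (Quotient.mk _ f)).symm
  refine ⟨u, fun n => ?_⟩
  have := hu n
  rw [← this]
  change _ = f (MulAut.conjNormal (x i)⁻¹⁻¹ n)
  rw [inv_inv]

/-- A surjection from the kernel of a map to the auxiliary group onto a finite group extends to the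
whole group: the obstruction, a central extension of the auxiliary group, splits. -/
theorem exists_extension {G : Type*} [Group G] (π : G →* Q0) [Group.FG π.ker] (x : QGen → G)
    (hx : ∀ i, π (x i) = qq i) {F : Type*} [Group F] [Finite F] (f : π.ker →* F)
    (hf : Function.Surjective f) : ∃ ψ : G →* F, ∀ n : π.ker, ψ n = f n := by
  have hr : ∀ r, relVal x r ∈ π.ker := fun r => by
    rw [MonoidHom.mem_ker, map_relVal]
    simp only [hx]
    exact relVal_qq r
  choose u hu using exists_conj π.ker x hr f
  -- Pairs `(g, u)` such that conjugation by `g` on the kernel corresponds to conjugation by `u` in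
  -- `F`. The quotient of `P` by the graph `ι.range` of `f` is a central extension of `Q0`.
  let P : Subgroup (G × F) :=
    { carrier := {p | ∀ n, f (MulAut.conjNormal p.1 n) = p.2 * f n * p.2⁻¹}
      one_mem' := fun n => by simp
      mul_mem' := by
        intro p q hp hq n
        change f (MulAut.conjNormal (p.1 * q.1) n) = p.2 * q.2 * f n * (p.2 * q.2)⁻¹
        rw [map_mul, MulAut.mul_apply, hp, hq]
        group
      inv_mem' := by
        intro p hp n
        have h := hp (MulAut.conjNormal p.1⁻¹ n)
        rw [← MulAut.mul_apply, ← map_mul, mul_inv_cancel, map_one, MulAut.one_apply] at h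
        change f (MulAut.conjNormal p.1⁻¹ n) = p.2⁻¹ * f n * p.2⁻¹⁻¹
        rw [h]
        group }
  have hnP : ∀ n : π.ker, ((n : G), f n) ∈ P := by
    intro n m
    change f (MulAut.conjNormal (n : G) m) = f n * f m * (f n)⁻¹
    rw [← map_inv, ← map_mul, ← map_mul]
    congr 1
  let ι : π.ker →* P :=
    { toFun := fun n => ⟨((n : G), f n), hnP n⟩
      map_one' := Subtype.ext (Prod.ext rfl (map_one f))
      map_mul' := fun m n => Subtype.ext (Prod.ext rfl (map_mul f m n)) }
  have hnorm : ι.range.Normal := by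
    refine ⟨?_⟩
    rintro _ ⟨n, rfl⟩ p
    exact ⟨MulAut.conjNormal p.1.1 n, Subtype.ext (Prod.ext rfl (p.2 n))⟩
  let fs : P →* G := (MonoidHom.fst G F).comp P.subtype
  let q := QuotientGroup.mk' ι.range
  let Z := fs.ker.map q
  have hZ : ∀ z ∈ Z, ∀ g, Commute z g := by
    rintro _ ⟨z, hz, rfl⟩ g
    obtain ⟨p, rfl⟩ := QuotientGroup.mk'_surjective _ g
    have hz1 : z.1.1 = 1 := hz
    have hc : Commute z p := by
      refine Subtype.ext (Prod.ext ?_ ?_)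
      · change z.1.1 * p.1.1 = p.1.1 * z.1.1
        rw [hz1, one_mul, mul_one]
      · change z.1.2 * p.1.2 = p.1.2 * z.1.2
        obtain ⟨n, hn⟩ := hf p.1.2
        have h := z.2 n
        rw [hz1, map_one, MulAut.one_apply, hn] at h
        exact (mul_inv_eq_iff_eq_mul.1 h.symm)
    exact hc.map q
  let p : QGen → P := fun i => ⟨(x i, u i), hu i⟩
  have hp : ∀ r, relVal (fun i => q (p i)) r ∈ Z := by
    intro r
    rw [← map_relVal]
    have h1 : fs (relVal p r) = relVal x r := map_relVal fs p r
    refine ⟨(ι ⟨_, hr r⟩)⁻¹ * relVal p r, ?_, ?_⟩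
    · change fs _ = 1
      rw [map_mul, map_inv, h1]
      exact inv_mul_cancel _
    · have h2 : q (ι ⟨_, hr r⟩) = 1 := (QuotientGroup.eq_one_iff _).2 ⟨_, rfl⟩
      rw [map_mul, map_inv, h2, inv_one, one_mul]
  obtain ⟨z, hz, hrel⟩ := central_split Z hZ _ hp
  obtain ⟨σ, hσ⟩ := exists_lift _ hrel
  let τ : P ⧸ ι.range →* Q0 := QuotientGroup.lift _ (π.comp fs) (by
    rintro _ ⟨n, rfl⟩
    exact n.2)
  have hτ : ∀ p, τ (q p) = π (fs p) := fun p => rfl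
  have hτσ : ∀ y, τ (σ y) = y := by
    have : τ.comp σ = MonoidHom.id Q0 := by
      refine PresentedGroup.ext fun i => ?_
      change τ (σ (qq i)) = qq i
      obtain ⟨w, hw, hw'⟩ := hz i
      rw [hσ, map_mul, ← hw', hτ, hτ]
      have hw1 : fs w = 1 := hw
      rw [hw1, map_one, mul_one]
      exact hx i
    exact DFunLike.congr_fun this
  have hex : ∀ g : G, ∃ p : P, fs p = g ∧ q p = σ (π g) := by
    intro g
    obtain ⟨p, hp⟩ := QuotientGroup.mk'_surjective _ (σ (π g))
    have h1 : π (fs p) = π g := by rw [← hτ, ← hτσ (π g)]; exact congrArg τ hp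
    have h2 : (fs p)⁻¹ * g ∈ π.ker := by
      rw [MonoidHom.mem_ker, map_mul, map_inv, h1, inv_mul_cancel]
    refine ⟨p * ι ⟨_, h2⟩, ?_, ?_⟩
    · rw [map_mul]
      exact mul_inv_cancel_left _ _
    · have h2 : q (ι ⟨_, h2⟩) = 1 := (QuotientGroup.eq_one_iff _).2 ⟨_, rfl⟩
      rw [map_mul, h2, mul_one]
      exact hp
  have huniq : ∀ p p' : P, fs p = fs p' → q p = q p' → p = p' := by
    intro p p' h1 h2
    obtain ⟨n, hn⟩ := QuotientGroup.eq.1 h2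
    have h3 : fs (ι n) = 1 := by rw [hn, map_mul, map_inv, h1, inv_mul_cancel]
    have h4 : n = 1 := Subtype.ext h3
    rw [h4, map_one] at hn
    exact inv_mul_eq_one.1 hn.symm
  choose s hs1 hs2 using hex
  have hsn : ∀ n : π.ker, s n = ι n := fun n => huniq _ _ (hs1 _) (by
    rw [hs2, MonoidHom.mem_ker.1 n.2, map_one]
    have h : q (ι n) = 1 := (QuotientGroup.eq_one_iff _).2 ⟨n, rfl⟩
    exact h.symm)
  refine ⟨MonoidHom.mk' (fun g => (s g).1.2) fun g h => ?_, fun n => ?_⟩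
  · have : s (g * h) = s g * s h := huniq _ _ (by rw [map_mul, hs1, hs1, hs1])
      (by rw [map_mul, hs2, hs2, hs2, map_mul, map_mul])
    rw [this]
    rfl
  · exact congrArg (fun w : P => w.1.2) (hsn n)

/-- The relators not involving `b` and `s` already force every finite quotient of the subgroup
to kill its generators. -/
theorem sub_dead {G : Type*} [Group G] (N H : Subgroup G) (x : QGen → G)
    (hm : ∀ i ∈ sLetters, x i ∈ H) (hx : ∀ r, relVal x r ∈ N) {F : Type*} [Group F] [Finite F]
    (ψ : H →* F) (hψ : ∀ n : H, (n : G) ∈ N → ψ n = 1) (i : QGen) (hi : i ∈ sLetters) :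
    ψ ⟨x i, hm i hi⟩ = 1 := by
  have hma := fun k => hm (.a k) (Or.inr ⟨k, rfl⟩)
  have hmc := hm .c (Or.inl rfl)
  have ha : ∀ k, ψ ⟨_, hma k⟩ = 1 := higman_dead (fun k => ψ ⟨_, hma k⟩) fun k => by
    have := hψ ((⟨_, hma (k + 1)⟩ : H)⁻¹ * (⟨_, hma k⟩ : H) * (⟨_, hma (k + 1)⟩ : H) *
      ((⟨_, hma k⟩ : H) ^ 2)⁻¹) (by push_cast; exact hx (.ha k))
    rw [map_mul, map_mul, map_mul, map_inv, map_inv, map_pow] at this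
    exact mul_inv_eq_one.1 this
  have hc : ψ ⟨_, hmc⟩ = 1 := sq_dead (ha 0) (by
    have := hψ ((⟨_, hma 0⟩ : H)⁻¹ * (⟨_, hmc⟩ : H) * (⟨_, hma 0⟩ : H) *
      ((⟨_, hmc⟩ : H) ^ 2)⁻¹) (by push_cast; exact hx .ac)
    rw [map_mul, map_mul, map_mul, map_inv, map_inv, map_pow] at this
    exact this)
  rcases hi with rfl | ⟨k, rfl⟩
  · exact hc
  · exact ha k

/-- Lifts of the generators of the auxiliary group. -/
noncomputable def xG (i : QGen) : G0 := SemidirectProduct.inl (lx i 1)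

theorem pG_xG (i : QGen) : pG (xG i) = qq i := (pG_inl _).trans (pX_lx _ _)

/-- A preimage under the projection is generated by lifts of generators and the kernel. -/
theorem comap_closure (S : Set QGen) :
    (Subgroup.closure (qq '' S)).comap pG = Subgroup.closure (xG '' S) ⊔ pG.ker := by
  rw [← Subgroup.comap_map_eq, MonoidHom.map_closure, Set.image_image]
  simp only [pG_xG]

theorem top_eq : (⊤ : Subgroup G0) = Subgroup.closure (xG '' Set.univ) ⊔ pG.ker := by
  rw [← comap_closure, Set.image_univ]
  have : Subgroup.closure (Set.range qq) = ⊤ := PresentedGroup.closure_range_of _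
  rw [this, Subgroup.comap_top]

theorem relVal_xG (r : QRel) : relVal xG r ∈ pG.ker := by
  rw [MonoidHom.mem_ker, map_relVal]
  simp only [pG_xG]
  exact relVal_qq r

/-- Finite quotients of either group restrict to surjections from the kernel of the projection, and
surjections from the kernel onto finite groups extend to `G0`. -/
theorem sameFiniteQuotients_H0 : SameFiniteQuotients G0 H0 := by
  intro F _ _
  have hle : pG.ker ≤ H0 := by
    rw [show H0 = _ from comap_closure sLetters]
    exact le_sup_right
  constructor
  · rintro ⟨f, hf⟩
    refine ⟨f.comp H0.subtype, fun y => ?_⟩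
    have hdead : ∀ (F' : Type) [Group F'] [Finite F'] (ψ : (⊤ : Subgroup G0) →* F'),
        (∀ n : (⊤ : Subgroup G0), (n : G0) ∈ pG.ker → ψ n = 1) →
        ∀ x : (⊤ : Subgroup G0), (x : G0) ∈ xG '' Set.univ → ψ x = 1 := by
      rintro F' _ _ ψ hψ ⟨_, -⟩ ⟨i, -, rfl⟩
      have h := gen_dead (fun i => (ψ.comp Subgroup.topEquiv.symm.toMonoidHom) (xG i))
        (fun r => by rw [← map_relVal]; exact hψ _ (relVal_xG r)) i
      exact h
    obtain ⟨n, hn, hy⟩ := surj_on_normal pG.ker ⊤ _ top_eq hdead F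
      (f.comp (⊤ : Subgroup G0).subtype)
      (fun y => (hf y).imp' (fun x => ⟨x, trivial⟩) fun x hx => hx) y
    exact ⟨⟨n, hle hn⟩, hy⟩
  · rintro ⟨f, hf⟩
    have hfN : ∀ y, ∃ n : H0, (n : G0) ∈ pG.ker ∧ f n = y := by
      refine surj_on_normal pG.ker H0 _ (comap_closure sLetters) ?_ F f hf
      intro F' _ _ ψ hψ
      have hm : ∀ i ∈ sLetters, xG i ∈ H0 := fun i hi => by
        rw [show H0 = _ from comap_closure sLetters]
        exact Subgroup.mem_sup_left (Subgroup.subset_closure ⟨i, hi, rfl⟩)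
      rintro ⟨_, hx⟩ ⟨i, hi, rfl⟩
      exact sub_dead pG.ker H0 xG hm relVal_xG ψ hψ i hi
    have : Group.FG pG.ker := (Group.fg_iff_subgroup_fg _).2 (ker_pG ▸ NT_fg)
    have hsurj : Function.Surjective (f.comp (Subgroup.inclusion hle)) := fun y => by
      obtain ⟨n, hn, hy⟩ := hfN y
      exact ⟨⟨n, hn⟩, hy⟩
    obtain ⟨ψ, hψ⟩ := exists_extension pG xG pG_xG _ hsurj
    exact ⟨ψ, fun y => by
      obtain ⟨n, hn⟩ := hsurj y
      exact ⟨n, (hψ n).trans hn⟩⟩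

end quot

/-- There is a finitely presented residually finite co-Hopfian group `G` with a finitely
generated subgroup `H` and an element `g` such that `g⁻¹ H g ⊊ H` (so `H` is not
co-Hopfian), while `G` and `H` have the same finite quotients. -/
theorem coHopfian_not_profinite_subgroup_version :
    ∃ (G : Type) (_ : Group G),
      IsFinitelyPresented G ∧ IsResiduallyFinite G ∧
      ∃ (H : Subgroup G) (g : G),
        H.FG ∧
        Subgroup.map (MulAut.conj g⁻¹).toMonoidHom H < H ∧
        IsCoHopfian G ∧
        SameFiniteQuotients G H := by
  exact ⟨G0, inferInstance, G0_fp, G0_rf, H0, g0, H0_fg, conj_H0_lt, G0_coHopf,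
    sameFiniteQuotients_H0⟩
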